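/- arXiv:2405.00729 — 2 statements merged into one kernel-verified Lean document; each statement's English description precedes it below -/
import Mathlib

section
/- Let (A, {Δ(λ)}) be a split quasi-hereditary algebra over a commutative Noetherian ring R. The subcategory F(Δ̃) is a resolving subcategory of the category of finitely generated A-modules that are projective over R: it contains all finitely generated projective A-modules, and is closed under extensions, direct summands, and kernels of epimorphisms. -/
open scoped TensorProduct
open CategoryTheory

noncomputable section

section Core

variable (R : Type) [CommRing R] (A : Type) [Ring A] [Algebra R A]

/-- The action of `a : A` on an `A`-module as an `R`-linear endomorphism. -/
def actL (M : Type) [AddCommGroup M] [Module R M] [Module A M] [IsScalarTower R A M]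
    (a : A) : M →ₗ[R] M where
  toFun m := a • m
  map_add' := smul_add a
  map_smul' r m := (smul_comm r a m).symm

/-- The right `A`-module (i.e. `Aᵐᵒᵖ`-module) structure on the `R`-linear dual of a left
`A`-module `M`, given by `(aᵒᵖ • f) m = f (a • m)`. -/
instance dualModule (M : Type) [AddCommGroup M] [Module R M] [Module A M]
    [IsScalarTower R A M] : Module Aᵐᵒᵖ (M →ₗ[R] R) where
  smul a f := f.comp (actL R A M a.unop)
  one_smul f := by ext m; show f ((1 : Aᵐᵒᵖ).unop • m) = f m; simp
  mul_smul a b f := by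
    ext m
    show f ((a * b).unop • m) = f (b.unop • a.unop • m)
    simp [mul_smul]
  smul_zero a := rfl
  smul_add a f g := rfl
  add_smul a b f := by
    ext m
    show f ((a + b).unop • m) = f (a.unop • m) + f (b.unop • m)
    simp [add_smul]
  zero_smul f := by ext m; show f ((0 : Aᵐᵒᵖ).unop • m) = 0; simp

@[simp] lemma dualModule_smul_apply (M : Type) [AddCommGroup M] [Module R M] [Module A M]
    [IsScalarTower R A M] (a : Aᵐᵒᵖ) (f : M →ₗ[R] R) (m : M) :
    (a • f) m = f (a.unop • m) := rfl

instance dualTower (M : Type) [AddCommGroup M] [Module R M] [Module A M]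
    [IsScalarTower R A M] : IsScalarTower R Aᵐᵒᵖ (M →ₗ[R] R) := by
  constructor
  intro r a f
  ext m
  show f ((r • a).unop • m) = r • f (a.unop • m)
  rw [MulOpposite.unop_smul, smul_assoc, map_smul]

/-- The left `A`-module structure on the `R`-linear dual of a right `A`-module
(i.e. an `Aᵐᵒᵖ`-module) `M`, given by `(a • f) m = f (aᵒᵖ • m)`. -/
instance dualModule' (M : Type) [AddCommGroup M] [Module R M] [Module Aᵐᵒᵖ M]
    [IsScalarTower R Aᵐᵒᵖ M] : Module A (M →ₗ[R] R) where
  smul a f := f.comp (actL R Aᵐᵒᵖ M (MulOpposite.op a))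
  one_smul f := by ext m; show f (MulOpposite.op (1 : A) • m) = f m; simp
  mul_smul a b f := by
    ext m
    show f (MulOpposite.op (a * b) • m) = f (MulOpposite.op b • MulOpposite.op a • m)
    rw [MulOpposite.op_mul, mul_smul]
  smul_zero a := rfl
  smul_add a f g := rfl
  add_smul a b f := by
    ext m
    show f (MulOpposite.op (a + b) • m) = f (MulOpposite.op a • m) + f (MulOpposite.op b • m)
    rw [MulOpposite.op_add, add_smul, map_add]
  zero_smul f := by ext m; show f (MulOpposite.op (0 : A) • m) = 0; simp

@[simp] lemma dualModule'_smul_apply (M : Type) [AddCommGroup M] [Module R M] [Module Aᵐᵒᵖ M]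
    [IsScalarTower R Aᵐᵒᵖ M] (a : A) (f : M →ₗ[R] R) (m : M) :
    (a • f) m = f (MulOpposite.op a • m) := rfl

instance dualTower' (M : Type) [AddCommGroup M] [Module R M] [Module Aᵐᵒᵖ M]
    [IsScalarTower R Aᵐᵒᵖ M] : IsScalarTower R A (M →ₗ[R] R) := by
  constructor
  intro r a f
  ext m
  show f (MulOpposite.op (r • a) • m) = r • f (MulOpposite.op a • m)
  rw [MulOpposite.op_smul, smul_assoc, map_smul]

variable (Λ : Type) [Fintype Λ] [PartialOrder Λ]

/-- Data witnessing that `X` is isomorphic to `Δ(λ) ⊗_R U` for some `λ ∈ S` and some finitely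
generated projective `R`-module `U`. -/
structure TensorFactor (Δ : Λ → Type) [∀ l, AddCommGroup (Δ l)] [∀ l, Module R (Δ l)]
    [∀ l, Module A (Δ l)] [∀ l, IsScalarTower R A (Δ l)]
    (S : Set Λ) (X : Type) [AddCommGroup X] [Module A X] : Type 1 where
  lam : Λ
  mem : lam ∈ S
  U : ModuleCat.{0} R
  fin : Module.Finite R U
  proj : Module.Projective R U
  iso : X ≃ₗ[A] (TensorProduct R (Δ lam) U)

/-- `M` belongs to `F(Δ̃_S)`: it is a finitely generated `A`-module with a finite filtration
whose factors are of the form `Δ(λ) ⊗_R U`, `λ ∈ S`, `U` a finitely generated projective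
`R`-module. -/
def InFilt (Δ : Λ → Type) [∀ l, AddCommGroup (Δ l)] [∀ l, Module R (Δ l)]
    [∀ l, Module A (Δ l)] [∀ l, IsScalarTower R A (Δ l)]
    (S : Set Λ) (M : Type) [AddCommGroup M] [Module A M] : Prop :=
  Module.Finite A M ∧
  ∃ (n : ℕ) (c : Fin (n + 1) → Submodule A M), c 0 = ⊥ ∧ c (Fin.last n) = ⊤ ∧ Monotone c ∧
    ∀ i : Fin n, Nonempty (TensorFactor R A Λ Δ S
      (↥(c i.succ) ⧸ (Submodule.comap (c i.succ).subtype (c i.castSucc))))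

/-- Data witnessing that `X` is isomorphic to `F(λ)` for some `λ ∈ S`. -/
structure PlainFactor (F : Λ → Type) [∀ l, AddCommGroup (F l)] [∀ l, Module A (F l)]
    (S : Set Λ) (X : Type) [AddCommGroup X] [Module A X] : Type 1 where
  lam : Λ
  mem : lam ∈ S
  iso : X ≃ₗ[A] F lam

/-- `M` has a finite filtration with factors among the modules `F(λ)`, `λ ∈ S`. -/
def InFiltPlain (F : Λ → Type) [∀ l, AddCommGroup (F l)] [∀ l, Module A (F l)]
    (S : Set Λ) (M : Type) [AddCommGroup M] [Module A M] : Prop :=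
  Module.Finite A M ∧
  ∃ (n : ℕ) (c : Fin (n + 1) → Submodule A M), c 0 = ⊥ ∧ c (Fin.last n) = ⊤ ∧ Monotone c ∧
    ∀ i : Fin n, Nonempty (PlainFactor A Λ F S
      (↥(c i.succ) ⧸ (Submodule.comap (c i.succ).subtype (c i.castSucc))))

/-- `X` is a direct summand of `Y` (as `A`-modules). -/
def IsDirectSummand (X Y : Type) [AddCommGroup X] [Module A X] [AddCommGroup Y]
    [Module A Y] : Prop :=
  ∃ (i : X →ₗ[A] Y) (p : Y →ₗ[A] X), p.comp i = LinearMap.id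

/-- `X` belongs to the additive closure `add T`. -/
def InAdd (T : Type) [AddCommGroup T] [Module A T] (X : Type) [AddCommGroup X]
    [Module A X] : Prop :=
  ∃ n : ℕ, IsDirectSummand A X (Fin n → T)

/-- A split quasi-hereditary structure on the `R`-algebra `A` with standard modules
`Δ(λ)`, `λ ∈ Λ` (following Rouquier's module-theoretic definition). -/
structure SplitQH (Δ : Λ → Type) [∀ l, AddCommGroup (Δ l)] [∀ l, Module R (Δ l)]
    [∀ l, Module A (Δ l)] [∀ l, IsScalarTower R A (Δ l)] : Type 1 where
  algFin : Module.Finite R A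
  algProj : Module.Projective R A
  deltaFinA : ∀ l, Module.Finite A (Δ l)
  deltaFinR : ∀ l, Module.Finite R (Δ l)
  deltaProjR : ∀ l, Module.Projective R (Δ l)
  hom_le : ∀ l m : Λ, (∃ f : Δ l →ₗ[A] Δ m, f ≠ 0) → l ≤ m
  endIso : ∀ l, Nonempty ((Module.End A (Δ l)) ≃ₐ[R] R)
  P : Λ → ModuleCat.{0} A
  P_proj : ∀ l, Module.Projective A (P l)
  P_fin : ∀ l, Module.Finite A (P l)
  epi : ∀ l, (P l : Type) →ₗ[A] Δ l
  epi_surj : ∀ l, Function.Surjective (epi l)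
  ker_filt : ∀ l, InFilt R A Λ Δ {m | l < m} ↥(LinearMap.ker (epi l))
  add_gen : ∀ (Q : ModuleCat.{0} A), Module.Finite A Q → Module.Projective A Q →
    InAdd A (∀ l, (P l : Type)) Q

/-- Vanishing of `Ext^i_A(M, N)` (computed in the abelian category of `A`-modules). -/
def extVanish (M : Type) [AddCommGroup M] [Module A M] (N : Type) [AddCommGroup N]
    [Module A N] (i : ℕ) : Prop :=
  Subsingleton (((Ext ℤ (ModuleCat.{0} A) i).obj
    (Opposite.op (ModuleCat.of A M))).obj (ModuleCat.of A N))

/-- `∇` is a family of costandard modules for the split quasi-hereditary algebra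
`(A, {Δ(λ)})`: the `R`-linear duals `D∇(λ)` make `A^op` split quasi-hereditary (with the same
poset), and the `Ext`-orthogonality relations with the standard modules hold. -/
def IsCostandard (Δ : Λ → Type) [∀ l, AddCommGroup (Δ l)] [∀ l, Module R (Δ l)]
    [∀ l, Module A (Δ l)] [∀ l, IsScalarTower R A (Δ l)]
    (N : Λ → Type) [∀ l, AddCommGroup (N l)] [∀ l, Module R (N l)]
    [∀ l, Module A (N l)] [∀ l, IsScalarTower R A (N l)] : Prop :=
  Nonempty (SplitQH R Aᵐᵒᵖ Λ (fun l => (N l →ₗ[R] R))) ∧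
  (∀ l, Nonempty ((Δ l →ₗ[A] N l) ≃ₗ[R] R)) ∧
  (∀ l m, l ≠ m → ∀ f : Δ l →ₗ[A] N m, f = 0) ∧
  (∀ l m : Λ, ∀ i : ℕ, 0 < i → extVanish A (Δ l) (N m) i)

/-- A bundled family of costandard modules. -/
structure CostandardFamily (Δ : Λ → Type) [∀ l, AddCommGroup (Δ l)] [∀ l, Module R (Δ l)]
    [∀ l, Module A (Δ l)] [∀ l, IsScalarTower R A (Δ l)] : Type 1 where
  Nab : Λ → Type
  [acg : ∀ l, AddCommGroup (Nab l)]
  [modR : ∀ l, Module R (Nab l)]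
  [modA : ∀ l, Module A (Nab l)]
  [tower : ∀ l, IsScalarTower R A (Nab l)]
  cost : IsCostandard R A Λ Δ Nab

attribute [instance] CostandardFamily.acg CostandardFamily.modR CostandardFamily.modA
  CostandardFamily.tower

/-- `T` is a family of (partial) tilting modules forming a characteristic tilting module
`⊕ T(λ)`: each `T(λ)` admits an exact sequence `0 → Δ(λ) → T(λ) → X(λ) → 0` with
`X(λ) ∈ F(Δ̃_{μ<λ})` and an exact sequence `0 → Y(λ) → T(λ) → ∇(λ) → 0` with
`Y(λ) ∈ F(∇̃_{μ<λ})`. -/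
def IsCharTilting (Δ : Λ → Type) [∀ l, AddCommGroup (Δ l)] [∀ l, Module R (Δ l)]
    [∀ l, Module A (Δ l)] [∀ l, IsScalarTower R A (Δ l)]
    (N : Λ → Type) [∀ l, AddCommGroup (N l)] [∀ l, Module R (N l)]
    [∀ l, Module A (N l)] [∀ l, IsScalarTower R A (N l)]
    (T : Λ → Type) [∀ l, AddCommGroup (T l)] [∀ l, Module A (T l)] : Prop :=
  ∀ l : Λ,
    (∃ f : Δ l →ₗ[A] T l, Function.Injective f ∧
      InFilt R A Λ Δ {m | m < l} ((T l) ⧸ LinearMap.range f)) ∧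
    (∃ g : T l →ₗ[A] N l, Function.Surjective g ∧
      InFilt R A Λ N {m | m < l} ↥(LinearMap.ker g))

end Core

end

noncomputable section

section AdditiveClosure

variable {A : Type} [Ring A]

lemma IsDirectSummand.trans {X Y Z : Type} [AddCommGroup X] [Module A X] [AddCommGroup Y]
    [Module A Y] [AddCommGroup Z] [Module A Z] (h₁ : IsDirectSummand A X Y)
    (h₂ : IsDirectSummand A Y Z) : IsDirectSummand A X Z := by
  obtain ⟨i, p, hp⟩ := h₁
  obtain ⟨j, q, hq⟩ := h₂
  refine ⟨j ∘ₗ i, p ∘ₗ q, ?_⟩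
  rw [LinearMap.comp_assoc, ← LinearMap.comp_assoc i j q, hq, LinearMap.id_comp, hp]

lemma LinearEquiv.isDirectSummand {X Y : Type} [AddCommGroup X] [Module A X] [AddCommGroup Y]
    [Module A Y] (e : X ≃ₗ[A] Y) : IsDirectSummand A X Y :=
  ⟨e, e.symm, by ext; simp⟩

variable {D X Y : Type} [AddCommGroup D] [Module A D] [AddCommGroup X] [Module A X]
  [AddCommGroup Y] [Module A Y]

lemma InAdd.of_isDirectSummand (h : InAdd A D Y) (hXY : IsDirectSummand A X Y) :
    InAdd A D X :=
  h.imp fun _ hn => hXY.trans hn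

lemma InAdd.of_equiv (h : InAdd A D Y) (e : X ≃ₗ[A] Y) : InAdd A D X :=
  h.of_isDirectSummand e.isDirectSummand

lemma InAdd.of_subsingleton [Subsingleton X] : InAdd A D X :=
  ⟨0, 0, 0, LinearMap.ext fun _ => Subsingleton.elim _ _⟩

lemma InAdd.self : InAdd A D D :=
  ⟨1, (LinearEquiv.funUnique (Fin 1) A D).symm.isDirectSummand⟩

lemma InAdd.prod (hX : InAdd A D X) (hY : InAdd A D Y) : InAdd A D (X × Y) := by
  obtain ⟨n, i, p, hp⟩ := hX
  obtain ⟨m, j, q, hq⟩ := hY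
  refine ⟨n + m, IsDirectSummand.trans (Y := (Fin n → D) × (Fin m → D))
    ⟨i.prodMap j, p.prodMap q, ?_⟩ (LinearEquiv.isDirectSummand ?_)⟩
  · exact LinearMap.ext fun x =>
      Prod.ext (LinearMap.congr_fun hp x.1) (LinearMap.congr_fun hq x.2)
  · exact (LinearEquiv.sumArrowLequivProdArrow (Fin n) (Fin m) A D).symm.trans
      (LinearEquiv.funCongrLeft A D finSumFinEquiv.symm)

lemma InAdd.finite [Module.Finite A D] (h : InAdd A D X) : Module.Finite A X := by
  obtain ⟨n, i, p, hp⟩ := h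
  exact Module.Finite.of_surjective p (LinearMap.surjective_of_comp_eq_id _ _ hp)

lemma InAdd.eq_zero_of_left (h : InAdd A D X) (hD : ∀ f : D →ₗ[A] Y, f = 0)
    (f : X →ₗ[A] Y) : f = 0 := by
  obtain ⟨n, i, p, hp⟩ := h
  have hfp : f ∘ₗ p = 0 := LinearMap.pi_ext' fun j => by rw [hD (_ ∘ₗ _), LinearMap.zero_comp]
  rw [← f.comp_id, ← hp, ← LinearMap.comp_assoc, hfp, LinearMap.zero_comp]

lemma InAdd.eq_zero_of_right (h : InAdd A D Y) (hD : ∀ f : X →ₗ[A] D, f = 0)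
    (f : X →ₗ[A] Y) : f = 0 := by
  obtain ⟨n, i, p, hp⟩ := h
  have hif : i ∘ₗ f = 0 := by
    ext x j
    exact LinearMap.congr_fun (hD (LinearMap.proj j ∘ₗ i ∘ₗ f)) x
  rw [← f.id_comp, ← hp, LinearMap.comp_assoc, hif, LinearMap.comp_zero]

/-- If every map from `D` to `Z` lifts along `g`, then so does every map from an object of
`add D`. -/
lemma InAdd.exists_lift {M Z : Type} [AddCommGroup M] [Module A M] [AddCommGroup Z] [Module A Z]
    {g : M →ₗ[A] Z} (h : InAdd A D X) (hD : ∀ f : D →ₗ[A] Z, ∃ f' : D →ₗ[A] M, g ∘ₗ f' = f)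
    (f : X →ₗ[A] Z) : ∃ f' : X →ₗ[A] M, g ∘ₗ f' = f := by
  obtain ⟨n, i, p, hp⟩ := h
  choose F hF using fun j : Fin n => hD (f ∘ₗ p ∘ₗ LinearMap.single A (fun _ => D) j)
  refine ⟨LinearMap.lsum A (fun _ => D) ℕ F ∘ₗ i, ?_⟩
  have hlift : g ∘ₗ LinearMap.lsum A (fun _ => D) ℕ F = f ∘ₗ p := by
    refine LinearMap.pi_ext' fun j => LinearMap.ext fun d => ?_
    change g (LinearMap.lsum A (fun _ => D) ℕ F (Pi.single j d)) = _
    rw [LinearMap.lsum_piSingle]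
    exact LinearMap.congr_fun (hF j) d
  rw [← LinearMap.comp_assoc, hlift, LinearMap.comp_assoc, hp, LinearMap.comp_id]

end AdditiveClosure

section TensorFactors

variable {R : Type} [CommRing R] {A : Type} [Ring A] [Algebra R A]
  {D X : Type} [AddCommGroup D] [Module R D] [Module A D] [IsScalarTower R A D]
  [AddCommGroup X] [Module A X]

/-- `D ⊗_R R^n` is isomorphic to `D^n` as an `A`-module. -/
def tensorPiEquiv (R A D : Type) [CommRing R] [Ring A] [Algebra R A] [AddCommGroup D] [Module R D]
    [Module A D] [IsScalarTower R A D] (n : ℕ) : D ⊗[R] (Fin n → R) ≃ₗ[A] (Fin n → D) :=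
  { TensorProduct.piScalarRight R R D (Fin n) with
    map_smul' := fun a x => by
      change TensorProduct.piScalarRight R R D (Fin n) (a • x) =
        a • TensorProduct.piScalarRight R R D (Fin n) x
      induction x with
      | zero => simp
      | add x y hx hy => rw [smul_add, map_add, hx, hy, map_add, smul_add]
      | tmul d v =>
        ext j
        simp [TensorProduct.smul_tmul', smul_comm a] }

lemma tensorPiEquiv_tmul {n : ℕ} (d : D) (v : Fin n → R) :
    tensorPiEquiv R A D n (d ⊗ₜ v) = fun j => v j • d :=
  TensorProduct.piScalarRightHom_tmul ..

lemma InAdd.of_tensor {U : Type} [AddCommGroup U] [Module R U] [Module.Finite R U]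
    [Module.Projective R U] : InAdd A D (D ⊗[R] U) := by
  obtain ⟨n, p, i, -, -, hp⟩ := Module.Finite.exists_comp_eq_id_of_projective R U
  refine ⟨n, IsDirectSummand.trans (Y := D ⊗[R] (Fin n → R))
    ⟨TensorProduct.AlgebraTensorModule.map (LinearMap.id (R := A) (M := D)) i,
      TensorProduct.AlgebraTensorModule.map (LinearMap.id (R := A) (M := D)) p, ?_⟩
    (tensorPiEquiv R A D n).isDirectSummand⟩
  rw [← TensorProduct.AlgebraTensorModule.map_comp, hp, LinearMap.id_comp,
    TensorProduct.AlgebraTensorModule.map_id]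

/-- If `End_A(D) = R`, then every object of `add D` is of the form `D ⊗_R U` with `U` a finitely
generated projective `R`-module. -/
lemma InAdd.exists_equiv_tensor (e : Module.End A D ≃ₐ[R] R) (h : InAdd A D X) :
    ∃ U : ModuleCat.{0} R, Module.Finite R U ∧ Module.Projective R U ∧
      Nonempty (X ≃ₗ[A] D ⊗[R] U) := by
  obtain ⟨n, i, p, hp⟩ := h
  let Φ := (endVecRingEquivMatrixEnd (Fin n) A D).trans e.toRingEquiv.mapMatrix
  let E : Matrix (Fin n) (Fin n) R := Φ (i ∘ₗ p)
  have hE : E * E = E := by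
    rw [← map_mul]
    congr 1
    rw [Module.End.mul_eq_comp, LinearMap.comp_assoc, ← LinearMap.comp_assoc p i p, hp,
      LinearMap.id_comp]
  have hentry (k j : Fin n) (d : D) : (i (p (Pi.single j d))) k = E k j • d := by
    have : algebraMap R (Module.End A D) (E k j) =
        endVecRingEquivMatrixEnd (Fin n) A D (i ∘ₗ p) k j := by
      rw [← AlgEquiv.commutes e.symm]
      exact e.symm_apply_apply _
    exact (LinearMap.congr_fun this d).symm
  let ε := Matrix.toLin' E
  have hε (x : Fin n → R) : ε (ε x) = ε x := by
    simp [ε, Matrix.mulVec_mulVec, hE]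
  let W := LinearMap.range ε
  have hW : ε.rangeRestrict ∘ₗ W.subtype = LinearMap.id := by
    ext1 ⟨x, y, hy⟩
    apply Subtype.ext
    simp [← hy, hε]
  have hfin : Module.Finite R W := Module.Finite.range ε
  have hproj : Module.Projective R W := Module.Projective.of_split _ _ hW
  refine ⟨ModuleCat.of R W, hfin, hproj, ⟨?_⟩⟩
  let φ := tensorPiEquiv R A D n
  let ι := TensorProduct.AlgebraTensorModule.map (LinearMap.id (R := A) (M := D)) W.subtype
  let π := TensorProduct.AlgebraTensorModule.map (LinearMap.id (R := A) (M := D)) ε.rangeRestrict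
  have hπι : π ∘ₗ ι = LinearMap.id := by
    rw [← TensorProduct.AlgebraTensorModule.map_comp, hW, LinearMap.id_comp,
      TensorProduct.AlgebraTensorModule.map_id]
  have hφ : φ.toLinearMap ∘ₗ ι ∘ₗ π = (i ∘ₗ p) ∘ₗ φ.toLinearMap := by
    apply TensorProduct.AlgebraTensorModule.ext
    intro d v
    have hv : (fun j => v j • d) = ∑ j, Pi.single j (v j • d) :=
      (Finset.univ_sum_single _).symm
    funext k
    simp only [φ, ι, π, LinearMap.comp_apply, LinearEquiv.coe_coe,
      TensorProduct.AlgebraTensorModule.map_tmul, LinearMap.id_apply, tensorPiEquiv_tmul]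
    rw [hv, map_sum, map_sum, Finset.sum_apply]
    simp [hentry, ε, Matrix.mulVec, dotProduct, Finset.sum_smul, mul_smul]
  have hφ' (y) : ι (π (φ.symm y)) = φ.symm (i (p y)) := by
    have := LinearMap.congr_fun hφ (φ.symm y)
    simp only [LinearMap.comp_apply, LinearEquiv.coe_coe, LinearEquiv.apply_symm_apply] at this
    rw [← this, LinearEquiv.symm_apply_apply]
  have hp' (x) : p (i x) = x := LinearMap.congr_fun hp x
  have hπι' (x) : π (ι x) = x := LinearMap.congr_fun hπι x
  refine LinearEquiv.ofLinearMap (π ∘ₗ φ.symm.toLinearMap ∘ₗ i) (p ∘ₗ φ.toLinearMap ∘ₗ ι) ?_ ?_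
  · refine LinearMap.ext fun x => ?_
    have h1 := hφ' (φ (ι x))
    rw [LinearEquiv.symm_apply_apply, hπι'] at h1
    simp only [LinearMap.comp_apply, LinearEquiv.coe_coe, LinearMap.id_apply]
    rw [← h1, hπι']
  · refine LinearMap.ext fun x => ?_
    simp only [LinearMap.comp_apply, LinearEquiv.coe_coe, LinearMap.id_apply]
    rw [hφ', LinearEquiv.apply_symm_apply, hp', hp']

end TensorFactors

section Filtrations

variable {A : Type} [Ring A] {Λ : Type}

/-- `M` has a finite filtration whose factors lie in `add (Δ l)` for some `l ∈ S`. -/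
inductive AddFiltered (A : Type) [Ring A] {Λ : Type} (Δ : Λ → Type) [∀ l, AddCommGroup (Δ l)]
    [∀ l, Module A (Δ l)] (S : Set Λ) :
    ∀ (M : Type) [AddCommGroup M] [Module A M], Prop
  | of_subsingleton (M : Type) [AddCommGroup M] [Module A M] (h : Subsingleton M) :
      AddFiltered A Δ S M
  | of_submodule (M : Type) [AddCommGroup M] [Module A M] (N : Submodule A M) (l : Λ)
      (hN : AddFiltered A Δ S N) (hl : l ∈ S) (hQ : InAdd A (Δ l) (M ⧸ N)) :
      AddFiltered A Δ S M

variable {Δ : Λ → Type} [∀ l, AddCommGroup (Δ l)] [∀ l, Module A (Δ l)] {S T : Set Λ}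

namespace AddFiltered

lemma of_equiv {M M' : Type} [AddCommGroup M] [Module A M] [AddCommGroup M'] [Module A M']
    (hM : AddFiltered A Δ S M) (e : M ≃ₗ[A] M') : AddFiltered A Δ S M' := by
  induction hM generalizing M' with
  | of_subsingleton M h => exact .of_subsingleton M' e.symm.toEquiv.subsingleton
  | of_submodule M N l hN hl hQ ih =>
    exact .of_submodule M' (N.map e.toLinearMap) l (ih (e.submoduleMap N)) hl
      (hQ.of_equiv (Submodule.Quotient.equiv N _ e rfl).symm)

lemma mono {M : Type} [AddCommGroup M] [Module A M] (hM : AddFiltered A Δ S M) (hST : S ⊆ T) :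
    AddFiltered A Δ T M := by
  induction hM with
  | of_subsingleton M h => exact .of_subsingleton M h
  | of_submodule M N l hN hl hQ ih => exact .of_submodule M N l ih (hST hl) hQ

lemma subsingleton_of_empty {M : Type} [AddCommGroup M] [Module A M]
    (hM : AddFiltered A Δ ∅ M) : Subsingleton M := by
  cases hM with
  | of_subsingleton _ h => exact h
  | of_submodule _ N l hN hl hQ => exact hl.elim

variable {M₁ M₂ M₃ : Type} [AddCommGroup M₁] [Module A M₁] [AddCommGroup M₂] [Module A M₂]
  [AddCommGroup M₃] [Module A M₃]

lemma of_exact_of_inAdd {f : M₁ →ₗ[A] M₂} {g : M₂ →ₗ[A] M₃} (hf : Function.Injective f)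
    (hg : Function.Surjective g) (hfg : Function.Exact f g) (h₁ : AddFiltered A Δ S M₁)
    {l : Λ} (hl : l ∈ S) (h₃ : InAdd A (Δ l) M₃) : AddFiltered A Δ S M₂ :=
  .of_submodule M₂ (LinearMap.range f) l (h₁.of_equiv (LinearEquiv.ofInjective f hf)) hl
    (h₃.of_equiv (hfg.linearEquivOfSurjective hg))

lemma of_inAdd {l : Λ} (hl : l ∈ S) (h : InAdd A (Δ l) M₁) : AddFiltered A Δ S M₁ :=
  of_exact_of_inAdd (M₁ := PUnit.{1}) (f := 0) (g := LinearMap.id)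
    (Function.injective_of_subsingleton _) Function.surjective_id
    (fun x => by simp [eq_comm]) (.of_subsingleton _ inferInstance) hl h

lemma _root_.exact_restrict_comap {f : M₁ →ₗ[A] M₂} {g : M₂ →ₗ[A] M₃}
    (hf : Function.Injective f) (hg : Function.Surjective g) (hfg : Function.Exact f g)
    {N : Submodule A M₃} {P : Submodule A M₂} (hP : N.comap g = P) :
    ∃ (f' : M₁ →ₗ[A] P) (g' : P →ₗ[A] N), Function.Injective f' ∧
      Function.Surjective g' ∧ Function.Exact f' g' := by
  subst hP
  refine ⟨f.codRestrict _ fun x => ?_, g.restrict fun x hx => hx, ?_, ?_, ?_⟩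
  · rw [Submodule.mem_comap, hfg.apply_apply_eq_zero]
    exact N.zero_mem
  · exact fun x y hxy => hf (congrArg Subtype.val hxy)
  · rintro ⟨y, hy⟩
    obtain ⟨x, rfl⟩ := hg y
    exact ⟨⟨x, hy⟩, rfl⟩
  · rintro ⟨x, hx⟩
    have := hfg x
    simpa [Subtype.ext_iff] using this

lemma of_exact {f : M₁ →ₗ[A] M₂} {g : M₂ →ₗ[A] M₃} (hf : Function.Injective f)
    (hg : Function.Surjective g) (hfg : Function.Exact f g) (h₁ : AddFiltered A Δ S M₁)
    (h₃ : AddFiltered A Δ S M₃) : AddFiltered A Δ S M₂ := by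
  induction h₃ generalizing M₂ with
  | of_subsingleton M₃ h =>
    refine h₁.of_equiv (LinearEquiv.ofBijective f ⟨hf, fun y => ?_⟩)
    exact (hfg y).1 (Subsingleton.elim _ _)
  | of_submodule M₃ N l hN hl hQ ih =>
    obtain ⟨f', g', hf', hg', hfg'⟩ := exact_restrict_comap hf hg hfg (rfl : N.comap g = _)
    refine of_exact_of_inAdd (f := (N.comap g).subtype) (g := N.mkQ ∘ₗ g)
      (Submodule.subtype_injective _) (N.mkQ_surjective.comp hg) (fun x => ?_)
      (ih hf' hg' hfg') hl hQ
    simp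

lemma prod (h₁ : AddFiltered A Δ S M₁) (h₂ : AddFiltered A Δ S M₂) :
    AddFiltered A Δ S (M₁ × M₂) :=
  of_exact (f := LinearMap.inl A M₁ M₂) (g := LinearMap.snd A M₁ M₂) LinearMap.inl_injective
    LinearMap.snd_surjective Function.Exact.inl_snd h₁ h₂

lemma pi {ι : Type} [Finite ι] {M : ι → Type} [∀ i, AddCommGroup (M i)] [∀ i, Module A (M i)]
    (h : ∀ i, AddFiltered A Δ S (M i)) : AddFiltered A Δ S (∀ i, M i) := by
  refine Finite.induction_empty_option (P := fun ι => ∀ (M : ι → Type) [∀ i, AddCommGroup (M i)]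
    [∀ i, Module A (M i)], (∀ i, AddFiltered A Δ S (M i)) → AddFiltered A Δ S (∀ i, M i))
    ?_ ?_ ?_ ι M h
  · intro α β e ih M _ _ hM
    exact (ih (fun i => M (e i)) fun i => hM (e i)).of_equiv (LinearEquiv.piCongrLeft A M e)
  · intro M _ _ _
    exact .of_subsingleton _ inferInstance
  · intro α _ ih M _ _ hM
    exact ((hM none).prod (ih (fun i => M (some i)) fun i => hM (some i))).of_equiv
      (LinearEquiv.piOptionEquivProd A).symm

lemma finite [∀ l, Module.Finite A (Δ l)] {M : Type} [AddCommGroup M] [Module A M]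
    (hM : AddFiltered A Δ S M) : Module.Finite A M := by
  induction hM with
  | of_subsingleton M h => exact inferInstance
  | of_submodule M N l hN hl hQ ih =>
    have := hQ.finite
    exact Module.Finite.of_submodule_quotient N

lemma eq_zero_of_right {K M : Type} [AddCommGroup K] [Module A K] [AddCommGroup M] [Module A M]
    (hM : AddFiltered A Δ S M) (h : ∀ l ∈ S, ∀ f : K →ₗ[A] Δ l, f = 0) (u : K →ₗ[A] M) :
    u = 0 := by
  induction hM with
  | of_subsingleton M _ => exact LinearMap.ext fun _ => Subsingleton.elim _ _
  | of_submodule M N l hN hl hQ ih =>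
    have hu (x : K) : u x ∈ N := by
      rw [← Submodule.Quotient.mk_eq_zero]
      exact LinearMap.congr_fun (hQ.eq_zero_of_right (h l hl) (N.mkQ ∘ₗ u)) x
    ext x
    exact congrArg Subtype.val (LinearMap.congr_fun (ih (u.codRestrict N hu)) x)

lemma eq_zero_of_left {K M : Type} [AddCommGroup K] [Module A K] [AddCommGroup M] [Module A M]
    (hK : AddFiltered A Δ S K) (h : ∀ l ∈ S, ∀ f : Δ l →ₗ[A] M, f = 0) (u : K →ₗ[A] M) :
    u = 0 := by
  induction hK with
  | of_subsingleton K _ => exact LinearMap.ext fun x => by rw [Subsingleton.elim x 0, map_zero,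
      map_zero]
  | of_submodule K N l hN hl hQ ih =>
    have hu : N ≤ LinearMap.ker u := fun x hx => LinearMap.congr_fun (ih (u ∘ₗ N.subtype)) ⟨x, hx⟩
    rw [← N.liftQ_mkQ u hu, hQ.eq_zero_of_left (h l hl) (N.liftQ u hu), LinearMap.zero_comp]

end AddFiltered

end Filtrations

section Subquotients

variable {A : Type} [Ring A]

/-- An injective map identifies the subquotients `N₂ / N₁` of its source with those of its
image. -/
def subquotientEquivMap {M M' : Type} [AddCommGroup M] [Module A M] [AddCommGroup M']
    [Module A M'] (f : M →ₗ[A] M') (hf : Function.Injective f) (N₁ N₂ : Submodule A M) :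
    (N₂ ⧸ N₁.comap N₂.subtype) ≃ₗ[A]
      ((N₂.map f) ⧸ (N₁.map f).comap (N₂.map f).subtype) :=
  Submodule.Quotient.equiv _ _ (Submodule.equivMapOfInjective f hf N₂) <| by
    ext ⟨y, x, hx, rfl⟩
    constructor
    · rintro ⟨⟨z, hz⟩, hz₁, hzx⟩
      have : f z = f x := congrArg Subtype.val hzx
      exact ⟨z, hz₁, this⟩
    · rintro ⟨z, hz, hzx⟩
      obtain rfl := hf hzx
      exact ⟨⟨z, hx⟩, hz, rfl⟩

/-- The quotient of the top submodule by `N` is the quotient by `N`. -/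
def subquotientTopEquiv {M : Type} [AddCommGroup M] [Module A M] (N : Submodule A M) :
    ((⊤ : Submodule A M) ⧸ N.comap (⊤ : Submodule A M).subtype) ≃ₗ[A] M ⧸ N :=
  Submodule.Quotient.equiv _ _ Submodule.topEquiv <| by
    ext x
    simp

end Subquotients

section SplitQuasiHereditary

variable {R : Type} [CommRing R] {A : Type} [Ring A] [Algebra R A]
  {Λ : Type}
  {Δ : Λ → Type} [∀ l, AddCommGroup (Δ l)] [∀ l, Module R (Δ l)]
  [∀ l, Module A (Δ l)] [∀ l, IsScalarTower R A (Δ l)]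
  {S : Set Λ} {M : Type} [AddCommGroup M] [Module A M]

lemma TensorFactor.nonempty_of_equiv {X Y : Type} [AddCommGroup X] [Module A X] [AddCommGroup Y]
    [Module A Y] (h : Nonempty (TensorFactor R A Λ Δ S Y)) (e : X ≃ₗ[A] Y) :
    Nonempty (TensorFactor R A Λ Δ S X) :=
  h.map fun t => { t with iso := e.trans t.iso }

lemma InFilt.addFiltered (hM : InFilt R A Λ Δ S M) : AddFiltered A Δ S M := by
  obtain ⟨-, n, c, hbot, htop, hmono, hfac⟩ := hM
  have key (i : Fin (n + 1)) : AddFiltered A Δ S (c i) := by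
    induction i using Fin.induction with
    | zero =>
      rw [hbot]
      exact .of_subsingleton _ inferInstance
    | succ i ih =>
      obtain ⟨t⟩ := hfac i
      have := t.fin
      have := t.proj
      exact .of_submodule _ _ t.lam
        (ih.of_equiv (Submodule.comapSubtypeEquivOfLe (hmono i.castSucc_le_succ)).symm)
        t.mem (InAdd.of_tensor.of_equiv t.iso)
  have := key (Fin.last n)
  rw [htop] at this
  exact this.of_equiv Submodule.topEquiv

lemma AddFiltered.inFilt (hM : AddFiltered A Δ S M) [∀ l, Module.Finite A (Δ l)]
    (e : ∀ l, Nonempty (Module.End A (Δ l) ≃ₐ[R] R)) : InFilt R A Λ Δ S M := by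
  refine ⟨hM.finite, ?_⟩
  induction hM with
  | of_subsingleton M h =>
    exact ⟨0, fun _ => ⊥, rfl, Subsingleton.elim _ _, monotone_const, fun i => i.elim0⟩
  | of_submodule M N l hN hl hQ ih =>
    obtain ⟨n, c, hbot, htop, hmono, hfac⟩ := ih
    refine ⟨n + 1, Fin.snoc (α := fun _ => Submodule A M) (fun i => (c i).map N.subtype) ⊤,
      ?_, Fin.snoc_last _ _, ?_, fun i => ?_⟩
    · rw [← Fin.castSucc_zero, Fin.snoc_castSucc, hbot, Submodule.map_bot]
    · refine Fin.monotone_iff_le_succ.2 fun i => ?_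
      cases i using Fin.lastCases with
      | last =>
        rw [Fin.succ_last, Fin.snoc_last]
        exact le_top
      | cast j =>
        rw [Fin.succ_castSucc, Fin.snoc_castSucc, Fin.snoc_castSucc]
        exact Submodule.map_mono (hmono j.castSucc_le_succ)
    · cases i using Fin.lastCases with
      | last =>
        rw [Fin.succ_last, Fin.snoc_last, Fin.snoc_castSucc, htop, Submodule.map_subtype_top]
        obtain ⟨U, hfin, hproj, ⟨e'⟩⟩ := hQ.exists_equiv_tensor (e l).some
        exact ⟨⟨l, hl, U, hfin, hproj, (subquotientTopEquiv N).trans e'⟩⟩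
      | cast j =>
        rw [Fin.succ_castSucc, Fin.snoc_castSucc, Fin.snoc_castSucc]
        exact TensorFactor.nonempty_of_equiv (hfac j)
          (subquotientEquivMap _ N.subtype_injective _ _).symm

lemma LinearMap.exists_lift_of_epi_of_projective {P D Z : Type} [AddCommGroup P] [Module A P]
    [AddCommGroup D] [Module A D] [AddCommGroup Z] [Module A Z] [Module.Projective A P]
    {π : P →ₗ[A] D} (hπ : Function.Surjective π)
    (hM : ∀ u : LinearMap.ker π →ₗ[A] M, u = 0) {g : M →ₗ[A] Z} (hg : Function.Surjective g)
    (f : D →ₗ[A] Z) : ∃ f' : D →ₗ[A] M, g ∘ₗ f' = f := by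
  obtain ⟨u, hu⟩ := Module.projective_lifting_property g (f ∘ₗ π) hg
  have hker : LinearMap.ker π ≤ LinearMap.ker u := fun x hx =>
    LinearMap.congr_fun (hM (u ∘ₗ (LinearMap.ker π).subtype)) ⟨x, hx⟩
  refine ⟨(LinearMap.ker π).liftQ u hker ∘ₗ (π.quotKerEquivOfSurjective hπ).symm.toLinearMap, ?_⟩
  ext d
  obtain ⟨x, rfl⟩ := hπ d
  have hx : (π.quotKerEquivOfSurjective hπ).symm (π x) = Submodule.Quotient.mk x := by
    rw [LinearEquiv.symm_apply_eq]
    rfl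
  simpa [hx] using LinearMap.congr_fun hu x

variable [PartialOrder Λ]

namespace SplitQH

lemma hom_eq_zero (h : SplitQH R A Λ Δ) {l m : Λ} (hlm : ¬ l ≤ m) (f : Δ l →ₗ[A] Δ m) : f = 0 :=
  not_not.1 fun hf => hlm (h.hom_le l m ⟨f, hf⟩)

/-- Objects of `add (Δ l)` are projective relative to `F(Δ̃_S)` if no element of `S` lies
above `l`. -/
lemma exists_lift (h : SplitQH R A Λ Δ) {l : Λ} (hl : ∀ s ∈ S, ¬ l < s)
    (hM : AddFiltered A Δ S M) {X Z : Type} [AddCommGroup X] [Module A X] [AddCommGroup Z]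
    [Module A Z] (hX : InAdd A (Δ l) X) {g : M →ₗ[A] Z} (hg : Function.Surjective g)
    (f : X →ₗ[A] Z) : ∃ f' : X →ₗ[A] M, g ∘ₗ f' = f := by
  have := h.P_proj l
  refine hX.exists_lift (LinearMap.exists_lift_of_epi_of_projective (h.epi_surj l) ?_ hg) f
  refine (h.ker_filt l).addFiltered.eq_zero_of_left fun k hk => ?_
  exact hM.eq_zero_of_right fun s hs => h.hom_eq_zero fun hks => hl s hs (hk.trans_le hks)

/-- If no element of `S` lies above `l`, the factors of index `l` of a module in `F(Δ̃_S)` can be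
collected in a submodule at the bottom. -/
lemma exists_exact (h : SplitQH R A Λ Δ) {l : Λ} (hl : ∀ s ∈ S, ¬ l < s)
    (hM : AddFiltered A Δ S M) :
    ∃ (D M' : Type) (_ : AddCommGroup D) (_ : Module A D) (_ : AddCommGroup M') (_ : Module A M')
      (i : D →ₗ[A] M) (q : M →ₗ[A] M'), Function.Injective i ∧ Function.Surjective q ∧
      Function.Exact i q ∧ InAdd A (Δ l) D ∧ AddFiltered A Δ (S \ {l}) M' := by
  induction hM with
  | of_subsingleton M hM =>
    exact ⟨M, M, _, _, _, _, LinearMap.id, LinearMap.id, Function.injective_id,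
      Function.surjective_id, fun x => by simp [Subsingleton.elim x 0], .of_subsingleton,
      .of_subsingleton M hM⟩
  | of_submodule M N m hN hm hQ ih =>
    obtain ⟨D, M', _, _, _, _, i, q, hi, hq, hiq, hD, hM'⟩ := ih
    by_cases hml : m = l
    · subst hml
      obtain ⟨s, hs⟩ := h.exists_lift hl (.of_submodule M N m hN hm hQ) hQ N.mkQ_surjective
        LinearMap.id
      have hs' (x) : N.mkQ (s x) = x := LinearMap.congr_fun hs x
      have hmk (n : N) : N.mkQ (n : M) = 0 := (Submodule.Quotient.mk_eq_zero N).2 n.2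
      let r : M →ₗ[A] N := (LinearMap.id - s ∘ₗ N.mkQ).codRestrict N fun x => by
        rw [← Submodule.Quotient.mk_eq_zero, ← Submodule.mkQ_apply]
        simp only [LinearMap.sub_apply, LinearMap.comp_apply, LinearMap.id_apply, map_sub, hs',
          sub_self]
      have hr (x : M) : (r x : M) = x - s (N.mkQ x) := rfl
      refine ⟨D × (M ⧸ N), M', _, inferInstance, _, _, (N.subtype ∘ₗ i).coprod s, q ∘ₗ r,
        ?_, ?_, ?_, hD.prod hQ, hM'⟩
      · rw [injective_iff_map_eq_zero]
        rintro ⟨d, x⟩ hdx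
        simp only [LinearMap.coprod_apply, LinearMap.comp_apply, Submodule.subtype_apply] at hdx
        have hx : x = 0 := by
          have := congrArg N.mkQ hdx
          rwa [map_add, hs', hmk, zero_add, map_zero] at this
        subst hx
        rw [map_zero, add_zero, Submodule.coe_eq_zero] at hdx
        rw [(map_eq_zero_iff i hi).1 hdx]
        rfl
      · intro y
        obtain ⟨n, rfl⟩ := hq y
        refine ⟨n, congrArg q (Subtype.ext ?_)⟩
        rw [hr, hmk, map_zero, sub_zero]
      · intro y
        constructor
        · intro hy
          obtain ⟨d, hd⟩ := (hiq _).1 hy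
          refine ⟨(d, N.mkQ y), ?_⟩
          simp only [LinearMap.coprod_apply, LinearMap.comp_apply, Submodule.subtype_apply, hd, hr,
            sub_add_cancel]
        · rintro ⟨⟨d, x⟩, rfl⟩
          have : r ((N.subtype ∘ₗ i).coprod s (d, x)) = i d := by
            apply Subtype.ext
            rw [hr]
            simp only [LinearMap.coprod_apply, LinearMap.comp_apply, Submodule.subtype_apply,
              map_add, hs', hmk, zero_add, add_sub_cancel_right]
          rw [LinearMap.comp_apply, this]
          exact hiq.apply_apply_eq_zero d
    · let B := LinearMap.range (N.subtype ∘ₗ i)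
      have hB : B ≤ N := by
        rintro _ ⟨d, rfl⟩
        exact (i d).2
      refine ⟨D, M ⧸ B, _, _, _, inferInstance, N.subtype ∘ₗ i, B.mkQ,
        N.subtype_injective.comp hi, B.mkQ_surjective, LinearMap.exact_map_mkQ_range _, hD, ?_⟩
      have hcomap : LinearMap.ker (B.mkQ ∘ₗ N.subtype) = LinearMap.ker q := by
        ext n
        rw [LinearMap.mem_ker, LinearMap.mem_ker, hiq n]
        change B.mkQ (n : M) = 0 ↔ _
        rw [Submodule.mkQ_apply, Submodule.Quotient.mk_eq_zero]
        exact exists_congr fun d => (Subtype.ext_iff (a1 := i d) (a2 := n)).symm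
      refine AddFiltered.of_exact_of_inAdd (l := m)
        (f := (LinearMap.ker (B.mkQ ∘ₗ N.subtype)).liftQ (B.mkQ ∘ₗ N.subtype) le_rfl)
        (g := B.liftQ N.mkQ (by rwa [Submodule.ker_mkQ])) ?_ ?_ ?_
        (hM'.of_equiv ((Submodule.quotEquivOfEq _ _ hcomap).trans
          (q.quotKerEquivOfSurjective hq)).symm) ⟨hm, hml⟩ hQ
      · exact LinearMap.ker_eq_bot.1 (Submodule.ker_liftQ_eq_bot _ _ _ le_rfl)
      · intro y
        obtain ⟨x, rfl⟩ := N.mkQ_surjective y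
        exact ⟨B.mkQ x, rfl⟩
      · rw [LinearMap.exact_iff]
        rw [Submodule.ker_liftQ, Submodule.ker_mkQ, Submodule.range_liftQ, LinearMap.range_comp,
          Submodule.range_subtype]

lemma addFiltered_of_isDirectSummand [Finite Λ] (h : SplitQH R A Λ Δ) (hM : AddFiltered A Δ S M) {X : Type}
    [AddCommGroup X] [Module A X] (hX : IsDirectSummand A X M) : AddFiltered A Δ S X := by
  induction S using WellFoundedLT.induction generalizing M X with
  | ind S ih =>
  obtain ⟨ι, p, hp⟩ := hX
  have hp' (x) : p (ι x) = x := LinearMap.congr_fun hp x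
  obtain rfl | hS := S.eq_empty_or_nonempty
  · have := hM.subsingleton_of_empty
    exact .of_subsingleton X (Function.LeftInverse.injective hp').subsingleton
  obtain ⟨l, hlS, hl⟩ := S.toFinite.exists_maximal hS
  have hl' : ∀ s ∈ S, ¬ l < s := fun s hs hls => hls.not_ge (hl hs hls.le)
  obtain ⟨D, M', _, _, _, _, i, q, hi, hq, hiq, hD, hM'⟩ := h.exists_exact hl' hM
  have hDM' : ∀ u : D →ₗ[A] M', u = 0 := hD.eq_zero_of_left <|
    hM'.eq_zero_of_right fun s hs => h.hom_eq_zero fun hls =>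
      hl' s hs.1 (lt_of_le_of_ne hls (Ne.symm hs.2))
  have hzero (d) : q (ι (p (i d))) = 0 := LinearMap.congr_fun (hDM' (q ∘ₗ ι ∘ₗ p ∘ₗ i)) d
  let X' := LinearMap.ker (q ∘ₗ ι)
  have hX' : InAdd A (Δ l) X' := by
    refine hD.of_isDirectSummand ⟨(LinearEquiv.ofInjective i hi).symm.toLinearMap ∘ₗ
      (ι ∘ₗ X'.subtype).codRestrict (LinearMap.range i) fun x => (hiq _).1 x.2,
      (p ∘ₗ i).codRestrict X' hzero, ?_⟩
    refine LinearMap.ext fun x => Subtype.ext ?_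
    have hy (y) : i ((LinearEquiv.ofInjective i hi).symm y) = y :=
      congrArg Subtype.val ((LinearEquiv.ofInjective i hi).apply_symm_apply y)
    exact (congrArg p (hy _)).trans (hp' x)
  have hX'' : IsDirectSummand A (X ⧸ X') M' := by
    have hker : LinearMap.ker q ≤ LinearMap.ker (X'.mkQ ∘ₗ p) := by
      intro x hx
      obtain ⟨d, rfl⟩ := (hiq x).1 hx
      exact (Submodule.Quotient.mk_eq_zero X').2 (hzero d)
    refine ⟨X'.liftQ (q ∘ₗ ι) le_rfl, (LinearMap.ker q).liftQ (X'.mkQ ∘ₗ p) hker ∘ₗ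
      (q.quotKerEquivOfSurjective hq).symm.toLinearMap, ?_⟩
    ext x
    have hx : (q.quotKerEquivOfSurjective hq).symm (q (ι x)) = Submodule.Quotient.mk (ι x) := by
      rw [LinearEquiv.symm_apply_eq]
      rfl
    simp [hx, hp']
  have hlt : S \ {l} < S := Set.sdiff_singleton_ssubset.2 hlS
  exact AddFiltered.of_exact X'.subtype_injective X'.mkQ_surjective
    (LinearMap.exact_subtype_mkQ X') (.of_inAdd hlS hX')
    ((ih _ hlt hM' hX'').mono Set.sdiff_subset)

lemma addFiltered_ker_of_inAdd [Finite Λ] (h : SplitQH R A Λ Δ) (hM : AddFiltered A Δ S M) {l : Λ} {X : Type}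
    [AddCommGroup X] [Module A X] (hX : InAdd A (Δ l) X) {g : M →ₗ[A] X}
    (hg : Function.Surjective g) : AddFiltered A Δ S (LinearMap.ker g) := by
  induction S using WellFoundedLT.induction generalizing M with
  | ind S ih =>
  by_cases hl : ∀ s ∈ S, ¬ l < s
  · obtain ⟨s, hs⟩ := h.exists_lift hl hM hX hg LinearMap.id
    have hs' (x) : g (s x) = x := LinearMap.congr_fun hs x
    refine h.addFiltered_of_isDirectSummand hM ⟨(LinearMap.ker g).subtype,
      (LinearMap.id - s ∘ₗ g).codRestrict _ fun x => by simp [hs'], ?_⟩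
    ext x
    simp
  · push Not at hl
    obtain ⟨s, hsS, hs⟩ := hl
    obtain ⟨k, hsk, hkS, hk⟩ := S.toFinite.exists_le_maximal hsS
    have hlk : l < k := hs.trans_le hsk
    obtain ⟨D, M', _, _, _, _, i, q, hi, hq, hiq, hD, hM'⟩ :=
      h.exists_exact (l := k) (fun s hs hks => hks.not_ge (hk hs hks.le)) hM
    have hgi : g ∘ₗ i = 0 :=
      hD.eq_zero_of_left (hX.eq_zero_of_right (h.hom_eq_zero hlk.not_ge)) _
    have hker : LinearMap.ker q ≤ LinearMap.ker g := by
      intro x hx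
      obtain ⟨d, rfl⟩ := (hiq x).1 hx
      exact LinearMap.congr_fun hgi d
    let g' : M' →ₗ[A] X :=
      (LinearMap.ker q).liftQ g hker ∘ₗ (q.quotKerEquivOfSurjective hq).symm.toLinearMap
    have hg' (x) : g' (q x) = g x := by
      have hx : (q.quotKerEquivOfSurjective hq).symm (q x) = Submodule.Quotient.mk x := by
        rw [LinearEquiv.symm_apply_eq]
        rfl
      simp [g', hx]
    have hcomap : (LinearMap.ker g').comap q = LinearMap.ker g := by
      ext x
      simp [hg']
    obtain ⟨f₁, f₂, h₁, h₂, h₁₂⟩ := exact_restrict_comap hi hq hiq hcomap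
    have hg's : Function.Surjective g' := fun y => by
      obtain ⟨x, rfl⟩ := hg y
      exact ⟨q x, hg' x⟩
    have hlt : S \ {k} < S := Set.sdiff_singleton_ssubset.2 hkS
    exact AddFiltered.of_exact h₁ h₂ h₁₂ (.of_inAdd hkS hD)
      ((ih _ hlt hM' hg's).mono Set.sdiff_subset)

lemma addFiltered_of_exact_left [Finite Λ] (h : SplitQH R A Λ Δ) {M₁ M₂ M₃ : Type}
    [AddCommGroup M₁] [Module A M₁] [AddCommGroup M₂] [Module A M₂] [AddCommGroup M₃] [Module A M₃]
    {f : M₁ →ₗ[A] M₂} {g : M₂ →ₗ[A] M₃} (hf : Function.Injective f) (hg : Function.Surjective g)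
    (hfg : Function.Exact f g) (h₂ : AddFiltered A Δ S M₂) (h₃ : AddFiltered A Δ S M₃) :
    AddFiltered A Δ S M₁ := by
  induction h₃ generalizing M₂ with
  | of_subsingleton M₃ _ =>
    refine h₂.of_equiv (LinearEquiv.ofBijective f ⟨hf, fun y => ?_⟩).symm
    exact (hfg y).1 (Subsingleton.elim _ _)
  | of_submodule M₃ N l hN hl hQ ih =>
    have hker : N.comap g = LinearMap.ker (N.mkQ ∘ₗ g) := by
      rw [LinearMap.ker_comp, Submodule.ker_mkQ]
    obtain ⟨f', g', hf', hg', hfg'⟩ := exact_restrict_comap hf hg hfg hker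
    exact ih hf' hg' hfg' (h.addFiltered_ker_of_inAdd h₂ hQ (N.mkQ_surjective.comp hg))

lemma addFiltered_of_projective [Finite Λ] (h : SplitQH R A Λ Δ) (Q : Type) [AddCommGroup Q]
    [Module A Q] [Module.Finite A Q] [Module.Projective A Q] : AddFiltered A Δ Set.univ Q := by
  obtain ⟨n, hn⟩ := h.add_gen (ModuleCat.of A Q) inferInstance inferInstance
  refine h.addFiltered_of_isDirectSummand (.pi fun _ => .pi fun l => ?_) hn
  exact AddFiltered.of_exact (LinearMap.ker (h.epi l)).subtype_injective (h.epi_surj l)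
    (LinearMap.exact_subtype_ker_map (h.epi l))
    ((h.ker_filt l).addFiltered.mono (Set.subset_univ _)) (.of_inAdd (Set.mem_univ l) .self)

end SplitQH

end SplitQuasiHereditary

/-- `F(Δ̃)` is a resolving subcategory of the finitely generated `A`-modules
which are projective over `R`: it contains the finitely generated projective `A`-modules and
is closed under extensions, direct summands and kernels of epimorphisms. -/
theorem filtration_category_is_resolving
    (R : Type) [CommRing R] [IsNoetherianRing R]
    (A : Type) [Ring A] [Algebra R A]
    (Λ : Type) [Fintype Λ] [PartialOrder Λ]
    (Δ : Λ → Type) [∀ l, AddCommGroup (Δ l)] [∀ l, Module R (Δ l)]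
    [∀ l, Module A (Δ l)] [∀ l, IsScalarTower R A (Δ l)]
    (h : SplitQH R A Λ Δ) :
    -- contains all finitely generated projective `A`-modules
    (∀ (P : Type) [AddCommGroup P] [Module A P], Module.Finite A P →
      Module.Projective A P → InFilt R A Λ Δ Set.univ P) ∧
    -- closed under extensions
    (∀ (M₁ M₂ M₃ : Type) [AddCommGroup M₁] [Module A M₁] [AddCommGroup M₂] [Module A M₂]
      [AddCommGroup M₃] [Module A M₃] (f : M₁ →ₗ[A] M₂) (g : M₂ →ₗ[A] M₃),
      Function.Injective f → Function.Surjective g → Function.Exact f g →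
      InFilt R A Λ Δ Set.univ M₁ → InFilt R A Λ Δ Set.univ M₃ →
      InFilt R A Λ Δ Set.univ M₂) ∧
    -- closed under direct summands
    (∀ (M X : Type) [AddCommGroup M] [Module A M] [AddCommGroup X] [Module A X],
      InFilt R A Λ Δ Set.univ M → IsDirectSummand A X M → InFilt R A Λ Δ Set.univ X) ∧
    -- closed under kernels of epimorphisms
    (∀ (M₁ M₂ M₃ : Type) [AddCommGroup M₁] [Module A M₁] [AddCommGroup M₂] [Module A M₂]
      [AddCommGroup M₃] [Module A M₃] (f : M₁ →ₗ[A] M₂) (g : M₂ →ₗ[A] M₃),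
      Function.Injective f → Function.Surjective g → Function.Exact f g →
      InFilt R A Λ Δ Set.univ M₂ → InFilt R A Λ Δ Set.univ M₃ →
      InFilt R A Λ Δ Set.univ M₁) := by
  have := h.deltaFinA
  refine ⟨?_, ?_, ?_, ?_⟩
  · intro P _ _ _ _
    exact (h.addFiltered_of_projective P).inFilt h.endIso
  · intro M₁ M₂ M₃ _ _ _ _ _ _ f g hf hg hfg h₁ h₃
    exact (AddFiltered.of_exact hf hg hfg h₁.addFiltered h₃.addFiltered).inFilt h.endIso
  · intro M X _ _ _ _ hM hX
    exact (h.addFiltered_of_isDirectSummand hM.addFiltered hX).inFilt h.endIso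
  · intro M₁ M₂ M₃ _ _ _ _ _ _ f g hf hg hfg h₂ h₃
    exact (h.addFiltered_of_exact_left hf hg hfg h₂.addFiltered h₃.addFiltered).inFilt h.endIso

end
end

section
/- Let (A, {Δ(λ)}) be a split quasi-hereditary algebra over a commutative Noetherian ring R. If M ∈ F(Δ̃) satisfies Ext^1_A(M, ⊕_{λ∈Λ} Δ(λ)) = 0, then M is a projective A-module. Dually, if N ∈ F(∇̃) satisfies Ext^1_A(⊕_{λ∈Λ} ∇(λ), N) = 0, then N is (A,R)-injective, i.e., N ∈ add DA. -/
open scoped TensorProduct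
open CategoryTheory

noncomputable section

section Lifting

variable {A : Type} [Ring A]

/-- If `Ext^1_A(M, X) = 0`, then `M` has a projective presentation whose kernel `K` has the
property that every map `K → X` extends to the projective cover. -/
lemma extVanish.exists_presentation {M X : Type} [AddCommGroup M] [Module A M]
    [AddCommGroup X] [Module A X] (h : extVanish A M X 1) :
    ∃ (P : ModuleCat.{0} A) (π : P →ₗ[A] M), Module.Projective A P ∧ Function.Surjective π ∧
      ∀ α : LinearMap.ker π →ₗ[A] X, ∃ β : P →ₗ[A] X, ∀ k : LinearMap.ker π, β k = α k := by
  let Q : ProjectiveResolution (ModuleCat.of A M) := ProjectiveResolution.of _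
  have hex : (Q.complex.linearYonedaObj ℤ (ModuleCat.of A X)).ExactAt 1 := by
    rw [HomologicalComplex.exactAt_iff_isZero_homology]
    refine Limits.IsZero.of_iso ?_ (Q.isoExt 1 (ModuleCat.of A X)).symm
    have : Subsingleton (((Ext ℤ (ModuleCat.{0} A) 1).obj
      (Opposite.op (ModuleCat.of A M))).obj (ModuleCat.of A X)) := h
    exact ModuleCat.isZero_of_subsingleton _
  rw [HomologicalComplex.exactAt_iff' _ 0 1 2 (by simp) (by simp),
    ShortComplex.moduleCat_exact_iff] at hex
  have hproj : Module.Projective A (Q.complex.X 0) :=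
    (IsProjective.iff_projective _).mpr (Q.projective 0)
  have hzero : ∀ x, Q.π.f 0 (Q.complex.d 1 0 x) = 0 := fun x =>
    congrArg (fun f => f.hom x) Q.complex_d_comp_π_f_zero
  have hker : ∀ x, Q.π.f 0 x = 0 → ∃ y, Q.complex.d 1 0 y = x := by
    have := Q.exact₀
    rw [ShortComplex.moduleCat_exact_iff] at this
    exact this
  have hsurj : Function.Surjective (Q.π.f 0) :=
    (ModuleCat.epi_iff_surjective _).mp inferInstance
  refine ⟨Q.complex.X 0, (Q.π.f 0).hom, hproj, hsurj, fun α => ?_⟩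
  let d : Q.complex.X 1 →ₗ[A] LinearMap.ker (Q.π.f 0).hom :=
    (Q.complex.d 1 0).hom.codRestrict _ hzero
  obtain ⟨β, hβ⟩ := hex (ModuleCat.ofHom (α.comp d)) (by
    refine ModuleCat.hom_ext (LinearMap.ext fun (x : Q.complex.X 2) => ?_)
    have hx : d (Q.complex.d 2 1 x) = 0 :=
      Subtype.ext (congrArg (fun f => f.hom x) (Q.complex.d_comp_d 2 1 0))
    exact (congrArg α hx).trans α.map_zero)
  refine ⟨β.hom, ?_⟩
  rintro ⟨k, hk⟩
  obtain ⟨y, rfl⟩ := hker k hk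
  exact congrArg (fun f => f.hom y) hβ

/-- `Ext^1_A(M, X) = 0` in terms of extensions: every map `U → X` extends along an injection
`U → V` with cokernel `M`. -/
def ExtendsAlong (M X : Type) [AddCommGroup M] [Module A M] [AddCommGroup X] [Module A X] :
    Prop :=
  ∀ (U V : Type) [AddCommGroup U] [Module A U] [AddCommGroup V] [Module A V]
    (f : U →ₗ[A] V) (g : V →ₗ[A] M), Function.Injective f → Function.Surjective g →
    Function.Exact f g → ∀ α : U →ₗ[A] X, ∃ β : V →ₗ[A] X, β.comp f = α

lemma exists_comp_eq_of_ker_le {V W X : Type} [AddCommGroup V] [Module A V]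
    [AddCommGroup W] [Module A W] [AddCommGroup X] [Module A X]
    (q : V →ₗ[A] W) (hq : Function.Surjective q) (φ : V →ₗ[A] X)
    (h : ∀ v, q v = 0 → φ v = 0) : ∃ ψ : W →ₗ[A] X, ψ.comp q = φ := by
  refine ⟨((LinearMap.ker q).liftQ φ h).comp
    (q.quotKerEquivOfSurjective hq).symm.toLinearMap, ?_⟩
  ext v
  have : (q.quotKerEquivOfSurjective hq).symm (q v) = (LinearMap.ker q).mkQ v := by
    rw [LinearEquiv.symm_apply_eq]; rfl
  simp only [LinearMap.comp_apply, LinearEquiv.coe_coe, this]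
  exact Submodule.liftQ_apply _ _ _

lemma exists_comp_eq_of_range_le {P U V : Type} [AddCommGroup P] [Module A P]
    [AddCommGroup U] [Module A U] [AddCommGroup V] [Module A V]
    (f : U →ₗ[A] V) (hf : Function.Injective f) (φ : P →ₗ[A] V)
    (h : ∀ p, ∃ u, f u = φ p) : ∃ ψ : P →ₗ[A] U, f.comp ψ = φ := by
  refine ⟨(LinearEquiv.ofInjective f hf).symm.toLinearMap.comp
    (φ.codRestrict (LinearMap.range f) h), ?_⟩
  ext p
  have := (LinearEquiv.ofInjective f hf).apply_symm_apply
    (φ.codRestrict (LinearMap.range f) h p)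
  exact congrArg Subtype.val this

lemma extVanish.exists_lift {M X : Type} [AddCommGroup M] [Module A M]
    [AddCommGroup X] [Module A X] (h : extVanish A M X 1)
    {E C : Type} [AddCommGroup E] [Module A E] [AddCommGroup C] [Module A C]
    (f : X →ₗ[A] E) (g : E →ₗ[A] C) (hf : Function.Injective f) (hg : Function.Surjective g)
    (hfg : Function.Exact f g) (φ : M →ₗ[A] C) : ∃ ψ : M →ₗ[A] E, g.comp ψ = φ := by
  obtain ⟨P, π, hP, hπ, hext⟩ := h.exists_presentation
  obtain ⟨θ, hθ⟩ := Module.projective_lifting_property g (φ.comp π) hg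
  have hθ' : ∀ p, g (θ p) = φ (π p) := LinearMap.congr_fun hθ
  obtain ⟨α, hα⟩ := exists_comp_eq_of_range_le f hf
    (θ.comp (LinearMap.ker π).subtype) fun k => (hfg _).mp (by
      rw [LinearMap.comp_apply, hθ', Submodule.subtype_apply, LinearMap.mem_ker.mp k.2, map_zero])
  obtain ⟨β, hβ⟩ := hext α
  obtain ⟨ψ, hψ⟩ := exists_comp_eq_of_ker_le π hπ (θ - f.comp β) fun p hp => by
    have h1 := hβ ⟨p, hp⟩
    have h2 := LinearMap.congr_fun hα ⟨p, hp⟩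
    simp only [LinearMap.comp_apply, Submodule.subtype_apply] at h1 h2
    simp [h1, h2]
  refine ⟨ψ, LinearMap.ext fun m => ?_⟩
  obtain ⟨p, rfl⟩ := hπ m
  have := LinearMap.congr_fun hψ p
  simp only [LinearMap.comp_apply, LinearMap.sub_apply] at this ⊢
  rw [this, map_sub, hfg.apply_apply_eq_zero, hθ', sub_zero]

lemma extVanish.extendsAlong {M X : Type} [AddCommGroup M] [Module A M]
    [AddCommGroup X] [Module A X] (h : extVanish A M X 1) : ExtendsAlong (A := A) M X := by
  intro U V _ _ _ _ f g hf hg hfg α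
  obtain ⟨P, π, hP, hπ, hext⟩ := h.exists_presentation
  obtain ⟨θ, hθ⟩ := Module.projective_lifting_property g π hg
  have hθ' : ∀ p, g (θ p) = π p := LinearMap.congr_fun hθ
  obtain ⟨γ, hγ⟩ := exists_comp_eq_of_range_le f hf
    (θ.comp (LinearMap.ker π).subtype) fun k => (hfg _).mp (by
      rw [LinearMap.comp_apply, hθ', Submodule.subtype_apply, LinearMap.mem_ker.mp k.2])
  obtain ⟨β, hβ⟩ := hext (α.comp γ)
  obtain ⟨ψ, hψ⟩ := exists_comp_eq_of_ker_le (f.coprod θ) (fun v => by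
      obtain ⟨p, hp⟩ := hπ (g v)
      obtain ⟨u, hu⟩ := (hfg (v - θ p)).mp (by rw [map_sub, hθ', hp, sub_self])
      exact ⟨(u, p), by simp [hu]⟩) (α.coprod β) (fun ⟨u, p⟩ hup => by
      simp only [LinearMap.coprod_apply] at hup ⊢
      have hp : π p = 0 := by
        have := congrArg g hup
        rwa [map_add, hfg.apply_apply_eq_zero, hθ', zero_add, map_zero] at this
      have h1 : β p = α (γ ⟨p, hp⟩) := hβ ⟨p, hp⟩
      have h2 : f (γ ⟨p, hp⟩) = θ p := LinearMap.congr_fun hγ ⟨p, hp⟩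
      rw [← h2, ← map_add] at hup
      rw [h1, ← map_add, (map_eq_zero_iff f hf).mp hup, map_zero])
  refine ⟨ψ, LinearMap.ext fun u => ?_⟩
  have := LinearMap.congr_fun hψ (u, 0)
  simpa using this

/-- A class of modules closed under extensions and direct summands. -/
structure IsThick (C : ∀ (X : Type) [AddCommGroup X] [Module A X], Prop) : Prop where
  zero : ∀ (X : Type) [AddCommGroup X] [Module A X] [Subsingleton X], C X
  extension : ∀ {X Y Z : Type} [AddCommGroup X] [Module A X] [AddCommGroup Y] [Module A Y]
    [AddCommGroup Z] [Module A Z] (f : X →ₗ[A] Y) (g : Y →ₗ[A] Z), Function.Injective f →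
    Function.Surjective g → Function.Exact f g → C X → C Z → C Y
  summand : ∀ {X Y : Type} [AddCommGroup X] [Module A X] [AddCommGroup Y] [Module A Y]
    (i : X →ₗ[A] Y) (p : Y →ₗ[A] X), p.comp i = LinearMap.id → C Y → C X

namespace IsThick

variable {C : ∀ (X : Type) [AddCommGroup X] [Module A X], Prop}

lemma of_equiv (hC : IsThick (A := A) C) {X Y : Type} [AddCommGroup X] [Module A X]
    [AddCommGroup Y] [Module A Y] (e : X ≃ₗ[A] Y) (hY : C Y) : C X :=
  hC.summand e.toLinearMap e.symm.toLinearMap (by ext; simp) hY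

lemma pi (hC : IsThick (A := A) C) (ι : Type) [Finite ι] (X : ι → Type)
    [∀ i, AddCommGroup (X i)] [∀ i, Module A (X i)] (hX : ∀ i, C (X i)) : C (∀ i, X i) := by
  revert X
  induction ι using Finite.induction_empty_option with
  | of_equiv e ih =>
    intro X _ _ hX
    exact hC.of_equiv (LinearEquiv.piCongrLeft A X e).symm (ih _ fun i => hX _)
  | h_empty =>
    intro X _ _ _
    exact hC.zero _
  | h_option ih =>
    intro X _ _ hX
    classical
    refine hC.extension (LinearMap.single A X none)
      (LinearMap.pi fun i => LinearMap.proj (some i)) (Pi.single_injective none) ?_ ?_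
      (hX none) (ih (fun i => X (some i)) fun i => hX _)
    · intro x
      exact ⟨fun o => Option.rec 0 x o, rfl⟩
    · intro x
      constructor
      · intro hx
        refine ⟨x none, funext fun o => ?_⟩
        cases o with
        | none => simp
        | some i => simpa using (congrFun hx i).symm
      · rintro ⟨y, rfl⟩
        ext i
        simp

end IsThick

lemma InFilt.mem_of_isThick {R : Type} [CommRing R] [Algebra R A] {Λ : Type} [Fintype Λ]
    [PartialOrder Λ] {Δ : Λ → Type} [∀ l, AddCommGroup (Δ l)] [∀ l, Module R (Δ l)]
    [∀ l, Module A (Δ l)] [∀ l, IsScalarTower R A (Δ l)] {S : Set Λ} {M : Type}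
    [AddCommGroup M] [Module A M] (hM : InFilt R A Λ Δ S M)
    {C : ∀ (X : Type) [AddCommGroup X] [Module A X], Prop} (hC : IsThick (A := A) C)
    (hΔ : ∀ l, C (Δ l)) : C M := by
  obtain ⟨-, n, c, hbot, htop, hmono, hfac⟩ := hM
  have e (l : Λ) (n : ℕ) : TensorProduct R (Δ l) (Fin n → R) ≃ₗ[A] (Fin n → Δ l) := by
    refine (TensorProduct.piScalarRight R R (Δ l) (Fin n)).toAddEquiv.toLinearEquiv
      fun a x => ?_
    change TensorProduct.piScalarRight R R (Δ l) (Fin n) _ =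
      a • TensorProduct.piScalarRight R R (Δ l) (Fin n) _
    induction x with
    | zero => simp only [smul_zero, map_zero]
    | add x y hx hy => rw [smul_add, map_add, hx, hy, map_add, smul_add]
    | tmul x y =>
      ext i
      simp only [TensorProduct.smul_tmul', TensorProduct.piScalarRight_apply,
        TensorProduct.piScalarRightHom_tmul, Pi.smul_apply]
      exact smul_comm _ _ _
  have hfactor (l : Λ) (U : Type) [AddCommGroup U] [Module R U] [Module.Finite R U]
      [Module.Projective R U] : C (TensorProduct R (Δ l) U) := by
    obtain ⟨n, p, i, -, -, hpi⟩ := Module.Finite.exists_comp_eq_id_of_projective R U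
    refine hC.summand (TensorProduct.AlgebraTensorModule.lTensor A (Δ l) i)
      (TensorProduct.AlgebraTensorModule.lTensor A (Δ l) p) ?_
      (hC.of_equiv (e l n) (hC.pi (Fin n) (fun _ => Δ l) fun _ => hΔ l))
    rw [← TensorProduct.AlgebraTensorModule.lTensor_comp, hpi,
      TensorProduct.AlgebraTensorModule.lTensor_id]
  have hstep : ∀ i : Fin (n + 1), C (c i) := by
    intro i
    induction i using Fin.induction with
    | zero =>
      rw [hbot]
      exact hC.zero _
    | succ i ih =>
      obtain ⟨t⟩ := hfac i
      have := t.fin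
      have := t.proj
      have hle : c i.castSucc ≤ c i.succ := hmono i.castSucc_le_succ
      refine hC.extension (Submodule.inclusion hle)
        (Submodule.mkQ _) (Submodule.inclusion_injective hle) (Submodule.mkQ_surjective _)
        ?_ ih (hC.of_equiv t.iso (hfactor t.lam t.U))
      rw [LinearMap.exact_iff, Submodule.ker_mkQ, Submodule.range_inclusion]
  have := hstep (Fin.last n)
  rw [htop] at this
  exact hC.of_equiv Submodule.topEquiv.symm this

/-- The modules `X` such that every map from a fixed submodule `K` of `P` to `X` extends to `P`
form a thick class, provided `P` is projective. -/
lemma isThick_submodule_extends (P : Type) [AddCommGroup P] [Module A P]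
    [Module.Projective A P] (K : Submodule A P) :
    IsThick (A := A) (fun X _ _ => ∀ α : K →ₗ[A] X, ∃ β : P →ₗ[A] X, ∀ k : K, β k = α k) where
  zero X _ _ _ α := ⟨0, fun k => Subsingleton.elim _ _⟩
  extension {X Y Z} _ _ _ _ _ _ f g hf hg hfg hX hZ α := by
    obtain ⟨γ, hγ⟩ := hZ (g.comp α)
    obtain ⟨δ, hδ⟩ := Module.projective_lifting_property g γ hg
    have hδ' : ∀ p, g (δ p) = γ p := LinearMap.congr_fun hδ
    obtain ⟨ε, hε⟩ := exists_comp_eq_of_range_le f hf (α - δ.comp K.subtype) fun k =>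
      (hfg _).mp (by simp [hδ', hγ])
    obtain ⟨β, hβ⟩ := hX ε
    refine ⟨δ + f.comp β, fun k => ?_⟩
    have := LinearMap.congr_fun hε k
    simp only [LinearMap.comp_apply, LinearMap.sub_apply, Submodule.subtype_apply] at this
    simp [hβ, this]
  summand {X Y} _ _ _ _ i p hpi hY α := by
    obtain ⟨β, hβ⟩ := hY (i.comp α)
    refine ⟨p.comp β, fun k => ?_⟩
    simpa [hβ] using LinearMap.congr_fun hpi (α k)

/-- Given a thick class `E`, the modules in `E` that are quotients of a projective module by a
submodule in `E` form a thick class. -/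
lemma IsThick.projectiveCover {E : ∀ (X : Type) [AddCommGroup X] [Module A X], Prop}
    (hE : IsThick (A := A) E) :
    IsThick (A := A) (fun X _ _ => E X ∧ ∃ (P : ModuleCat.{0} A) (q : P →ₗ[A] X),
      Module.Projective A P ∧ Function.Surjective q ∧ E (LinearMap.ker q)) where
  zero X _ _ _ := ⟨hE.zero X, ModuleCat.of A PUnit, 0, inferInstanceAs
    (Module.Projective A PUnit), fun x => ⟨0, Subsingleton.elim _ _⟩,
    have : Subsingleton (ModuleCat.of A PUnit) := inferInstanceAs (Subsingleton PUnit)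
    hE.zero _⟩
  extension {X Y Z} _ _ _ _ _ _ f g hf hg hfg hX hZ := by
    obtain ⟨hX, P, p, hP, hp, hpE⟩ := hX
    obtain ⟨hZ, Q, q, hQ, hq, hqE⟩ := hZ
    obtain ⟨θ, hθ⟩ := Module.projective_lifting_property g q hg
    have hθ' : ∀ z, g (θ z) = q z := LinearMap.congr_fun hθ
    have hcop : ∀ x z, g (f (p x) + θ z) = q z := fun x z => by
      rw [map_add, hfg.apply_apply_eq_zero, hθ', zero_add]
    let r : (P × Q) →ₗ[A] Y := (f.comp p).coprod θ
    have hr : ∀ x z, r (x, z) = f (p x) + θ z := fun x z => by simp [r]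
    refine ⟨hE.extension f g hf hg hfg hX hZ, ModuleCat.of A (P × Q), r,
      inferInstanceAs (Module.Projective A (P × Q)), ?_, ?_⟩
    · intro y
      obtain ⟨z, hz⟩ := hq (g y)
      obtain ⟨x, hx⟩ := (hfg (y - θ z)).mp (by rw [map_sub, hθ', hz, sub_self])
      obtain ⟨w, rfl⟩ := hp x
      exact ⟨(w, z), by rw [hr, hx, sub_add_cancel]⟩
    · refine hE.extension
        (((LinearMap.inl A P Q).comp (LinearMap.ker p).subtype).codRestrict (LinearMap.ker r)
          fun x => ?_)
        (((LinearMap.snd A P Q).comp (LinearMap.ker r).subtype).codRestrict (LinearMap.ker q)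
          fun x => ?_) ?_ ?_ ?_ hpE hqE
      · have := LinearMap.mem_ker.mp x.2
        simp [r, this]
      · obtain ⟨⟨x, z⟩, hxz⟩ := x
        have := congrArg g (LinearMap.mem_ker.mp hxz)
        rw [hr, hcop, map_zero] at this
        exact this
      · intro x y hxy
        have := congrArg (fun t => t.1.1) hxy
        exact Subtype.ext this
      · rintro ⟨z, hz⟩
        obtain ⟨x, hx⟩ := (hfg (θ z)).mp (by rw [hθ', hz])
        obtain ⟨w, rfl⟩ := hp x
        refine ⟨⟨(-w, z), ?_⟩, rfl⟩
        rw [LinearMap.mem_ker, hr, map_neg, map_neg, hx, neg_add_cancel]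
      · rintro ⟨⟨x, z⟩, hxz⟩
        constructor
        · intro h
          obtain rfl : z = 0 := congrArg Subtype.val h
          have hx : f (p x) = 0 := by
            have := LinearMap.mem_ker.mp hxz
            rwa [hr, map_zero, add_zero] at this
          exact ⟨⟨x, (map_eq_zero_iff f hf).mp hx⟩, rfl⟩
        · rintro ⟨w, hw⟩
          have := congrArg (fun t => t.1.2) hw
          exact Subtype.ext this.symm
  summand {X Y} _ _ _ _ i p hpi hY := by
    obtain ⟨hY, P, q, hP, hq, hqE⟩ := hY
    have hpi' : ∀ x, p (i x) = x := LinearMap.congr_fun hpi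
    have hker : E (LinearMap.ker p) := by
      refine hE.summand (LinearMap.ker p).subtype
        ((LinearMap.id - i.comp p).codRestrict (LinearMap.ker p) fun y => by simp [hpi']) ?_ hY
      ext y
      simp
    refine ⟨hE.summand i p hpi hY, P, p.comp q, hP, ?_, ?_⟩
    · rw [LinearMap.coe_comp]
      exact Function.Surjective.comp (fun x => ⟨i x, hpi' x⟩) hq
    refine hE.extension (Submodule.inclusion (LinearMap.ker_le_ker_comp q p))
      ((q.comp (LinearMap.ker (p.comp q)).subtype).codRestrict (LinearMap.ker p) fun x => x.2)
      (Submodule.inclusion_injective _) ?_ ?_ hqE hker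
    · rintro ⟨y, hy⟩
      obtain ⟨x, rfl⟩ := hq y
      exact ⟨⟨x, hy⟩, rfl⟩
    · rintro ⟨x, hx⟩
      constructor
      · intro h
        exact ⟨⟨x, congrArg Subtype.val h⟩, rfl⟩
      · rintro ⟨w, hw⟩
        obtain rfl : (w : P) = x := congrArg Subtype.val hw
        exact Subtype.ext w.2

/-- `M` belongs to every thick class containing the modules `Δ(λ)`. -/
def InThickClosure {Λ : Type} (Δ : Λ → Type) [∀ l, AddCommGroup (Δ l)] [∀ l, Module A (Δ l)]
    (M : Type) [AddCommGroup M] [Module A M] : Prop :=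
  ∀ C : ∀ (X : Type) [AddCommGroup X] [Module A X], Prop, IsThick (A := A) C →
    (∀ l, C (Δ l)) → C M

lemma projective_of_inThickClosure {R : Type} [CommRing R] [Algebra R A] {Λ : Type} [Fintype Λ]
    [PartialOrder Λ] {Δ : Λ → Type} [∀ l, AddCommGroup (Δ l)] [∀ l, Module R (Δ l)]
    [∀ l, Module A (Δ l)] [∀ l, IsScalarTower R A (Δ l)] (h : SplitQH R A Λ Δ)
    {M : Type} [AddCommGroup M] [Module A M] (hM : InThickClosure (A := A) Δ M)
    {P : Type} [AddCommGroup P] [Module A P] [Module.Projective A P] (π : P →ₗ[A] M)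
    (hπ : Function.Surjective π)
    (hext : ∀ l, ∀ α : LinearMap.ker π →ₗ[A] Δ l,
      ∃ β : P →ₗ[A] Δ l, ∀ k : LinearMap.ker π, β k = α k) :
    Module.Projective A M := by
  have hE := isThick_submodule_extends P (LinearMap.ker π)
  obtain ⟨-, Q, q, hQ, hq, hqE⟩ := hM _ hE.projectiveCover fun l =>
    ⟨hext l, h.P l, h.epi l, h.P_proj l, h.epi_surj l, (h.ker_filt l).mem_of_isThick hE hext⟩
  obtain ⟨θ, hθ⟩ := Module.projective_lifting_property q π hq
  have hθ' : ∀ x, q (θ x) = π x := LinearMap.congr_fun hθ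
  obtain ⟨β, hβ⟩ := hqE ((θ.comp (LinearMap.ker π).subtype).codRestrict (LinearMap.ker q)
    fun x => by simp [hθ'])
  obtain ⟨s, hs⟩ := exists_comp_eq_of_ker_le π hπ (θ - (LinearMap.ker q).subtype.comp β)
    fun x hx => by
      have : (β x : Q) = θ x := congrArg Subtype.val (hβ ⟨x, hx⟩)
      simp [this]
  refine Module.Projective.of_split s q (LinearMap.ext fun m => ?_)
  obtain ⟨x, rfl⟩ := hπ m
  have := LinearMap.congr_fun hs x
  simp only [LinearMap.comp_apply] at this
  simp [this, hθ']

lemma projective_of_extVanish {R : Type} [CommRing R] [Algebra R A] {Λ : Type} [Fintype Λ]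
    [PartialOrder Λ] {Δ : Λ → Type} [∀ l, AddCommGroup (Δ l)] [∀ l, Module R (Δ l)]
    [∀ l, Module A (Δ l)] [∀ l, IsScalarTower R A (Δ l)] (h : SplitQH R A Λ Δ)
    {M : Type} [AddCommGroup M] [Module A M] (hM : InFilt R A Λ Δ Set.univ M)
    (hext : extVanish A M (∀ l, Δ l) 1) : Module.Projective A M := by
  classical
  obtain ⟨P, π, hP, hπ, hα⟩ := hext.exists_presentation
  refine projective_of_inThickClosure h (fun C hC hΔ => hM.mem_of_isThick hC hΔ) π hπ
    fun l α => ?_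
  obtain ⟨β, hβ⟩ := hα ((LinearMap.single A Δ l).comp α)
  exact ⟨(LinearMap.proj l).comp β, fun k => by simp [hβ]⟩

section FGProj

variable (R : Type) [CommRing R]

/-- `M` is a finitely generated projective `R`-module. -/
structure FGProj (M : Type) [AddCommGroup M] [Module R M] : Prop where
  fin : Module.Finite R M
  proj : Module.Projective R M

variable {R}

lemma FGProj.of_retract {M N : Type} [AddCommGroup M] [Module R M] [AddCommGroup N] [Module R N]
    (hN : FGProj R N) (i : M →ₗ[R] N) (p : N →ₗ[R] M) (hpi : p.comp i = LinearMap.id) :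
    FGProj R M := by
  have := hN.fin
  have := hN.proj
  exact ⟨Module.Finite.of_surjective p fun x => ⟨i x, LinearMap.congr_fun hpi x⟩,
    Module.Projective.of_split i p hpi⟩

lemma FGProj.of_equiv {M N : Type} [AddCommGroup M] [Module R M] [AddCommGroup N] [Module R N]
    (hN : FGProj R N) (e : M ≃ₗ[R] N) : FGProj R M :=
  hN.of_retract e.toLinearMap e.symm.toLinearMap (by ext; simp)

lemma FGProj.of_subsingleton (M : Type) [AddCommGroup M] [Module R M] [Subsingleton M] :
    FGProj R M :=
  ⟨inferInstance, inferInstance⟩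

lemma FGProj.of_exact {X Y Z : Type} [AddCommGroup X] [Module R X] [AddCommGroup Y] [Module R Y]
    [AddCommGroup Z] [Module R Z] (f : X →ₗ[R] Y) (g : Y →ₗ[R] Z) (hf : Function.Injective f)
    (hg : Function.Surjective g) (hfg : Function.Exact f g) (hX : FGProj R X)
    (hZ : FGProj R Z) : FGProj R Y := by
  have := hX.fin
  have := hX.proj
  have := hZ.fin
  have := hZ.proj
  obtain ⟨e, -⟩ := ((hfg.split_tfae hf hg).out 0 2).mp
    (g.exists_rightInverse_of_surjective (LinearMap.range_eq_top.mpr hg))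
  exact FGProj.of_equiv (N := X × Z) ⟨inferInstance, inferInstance⟩ e

lemma exists_retraction_of_projective {X Y Z : Type} [AddCommGroup X] [Module R X]
    [AddCommGroup Y] [Module R Y] [AddCommGroup Z] [Module R Z] (f : X →ₗ[R] Y)
    (g : Y →ₗ[R] Z) (hf : Function.Injective f) (hg : Function.Surjective g)
    (hfg : Function.Exact f g) [Module.Projective R Z] :
    ∃ r : Y →ₗ[R] X, r.comp f = LinearMap.id :=
  ((hfg.split_tfae hf hg).out 0 1).mp
    (g.exists_rightInverse_of_surjective (LinearMap.range_eq_top.mpr hg))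

end FGProj

lemma ExtendsAlong.isThick (X : Type) [AddCommGroup X] [Module A X] :
    IsThick (A := A) (fun M _ _ => ExtendsAlong (A := A) M X) where
  zero M _ _ _ := by
    intro U V _ _ _ _ f g hf hg hfg α
    let e := LinearEquiv.ofBijective f ⟨hf, fun v => (hfg v).mp (Subsingleton.elim _ _)⟩
    refine ⟨α.comp e.symm.toLinearMap, LinearMap.ext fun u => ?_⟩
    have : e.symm (f u) = u := e.symm_apply_apply u
    simp [this]
  extension {M M' M''} _ _ _ _ _ _ f g hf hg hfg hM hM'' := by
    intro U V _ _ _ _ u v hu hv huv α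
    obtain ⟨w, hw⟩ := exists_comp_eq_of_range_le f hf (v.comp (LinearMap.ker (g.comp v)).subtype)
      fun x => (hfg _).mp x.2
    have hw' : ∀ x, f (w x) = v x := LinearMap.congr_fun hw
    obtain ⟨β, hβ⟩ := hM U (LinearMap.ker (g.comp v))
      (u.codRestrict _ fun x => by simp [huv.apply_apply_eq_zero]) w
      (fun x y hxy => hu (congrArg Subtype.val hxy))
      (fun m => by
        obtain ⟨y, hy⟩ := hv (f m)
        refine ⟨⟨y, ?_⟩, hf ((hw' _).trans hy)⟩
        simp [hy, hfg.apply_apply_eq_zero])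
      (fun x => by
        rw [← map_eq_zero_iff f hf, hw', huv]
        exact ⟨fun ⟨y, hy⟩ => ⟨y, Subtype.ext hy⟩, fun ⟨y, hy⟩ => ⟨y, congrArg Subtype.val hy⟩⟩)
      α
    obtain ⟨γ, hγ⟩ := hM'' (LinearMap.ker (g.comp v)) V (Submodule.subtype _) (g.comp v)
      Subtype.val_injective
      (by rw [LinearMap.coe_comp]; exact hg.comp hv)
      (fun x => ⟨fun h => ⟨⟨x, h⟩, rfl⟩, fun ⟨y, hy⟩ => hy ▸ y.2⟩) β
    refine ⟨γ, LinearMap.ext fun x => ?_⟩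
    have h1 := LinearMap.congr_fun hβ x
    rw [← hγ] at h1
    exact h1
  summand {M N} _ _ _ _ i p hpi hN := by
    intro U V _ _ _ _ u v hu hv huv α
    have hpi' : ∀ x, p (i x) = x := LinearMap.congr_fun hpi
    obtain ⟨β, hβ⟩ := hN U (V × LinearMap.ker p) ((LinearMap.inl A _ _).comp u)
      ((i.comp v).coprod (LinearMap.ker p).subtype)
      (by rw [LinearMap.coe_comp]; exact LinearMap.inl_injective.comp hu)
      (fun y => by
        obtain ⟨x, hx⟩ := hv (p y)
        exact ⟨(x, ⟨y - i (p y), by simp [hpi']⟩), by simp [hx]⟩)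
      (by
        rintro ⟨x, k, hk⟩
        constructor
        · intro h
          simp only [LinearMap.coprod_apply, LinearMap.comp_apply, Submodule.subtype_apply] at h
          have h1 : v x = 0 := by
            have := congrArg p h
            rwa [map_add, hpi', LinearMap.mem_ker.mp hk, add_zero, map_zero] at this
          obtain ⟨y, rfl⟩ := (huv x).mp h1
          rw [h1, map_zero, zero_add] at h
          subst h
          exact ⟨y, rfl⟩
        · rintro ⟨y, hy⟩
          rw [← hy]
          simp [huv.apply_apply_eq_zero]) α
    refine ⟨β.comp (LinearMap.inl A _ _), ?_⟩
    rw [LinearMap.comp_assoc, hβ]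

section Duality

variable {R : Type} [CommRing R] [Algebra R A]

lemma fgProj_hom_and_extendsAlong_isThick (N : Type) [AddCommGroup N] [Module R N] [Module A N]
    [IsScalarTower R A N] :
    IsThick (A := A) (fun X _ _ => FGProj R (X →ₗ[A] N) ∧ ExtendsAlong (A := A) X N) where
  zero X _ _ _ := ⟨FGProj.of_subsingleton _, (ExtendsAlong.isThick N).zero X⟩
  extension {X Y Z} _ _ _ _ _ _ f g hf hg hfg hX hZ := by
    refine ⟨FGProj.of_exact (LinearMap.lcomp R N g) (LinearMap.lcomp R N f) ?_
      (fun α => hZ.2 X Y f g hf hg hfg α) ?_ hZ.1 hX.1,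
      (ExtendsAlong.isThick N).extension f g hf hg hfg hX.2 hZ.2⟩
    · intro φ ψ h
      exact (LinearMap.cancel_right hg).mp h
    · intro φ
      constructor
      · intro h
        refine exists_comp_eq_of_ker_le g hg φ fun y hy => ?_
        obtain ⟨x, rfl⟩ := (hfg y).mp hy
        exact LinearMap.congr_fun h x
      · rintro ⟨ψ, rfl⟩
        ext x
        simp [hfg.apply_apply_eq_zero]
  summand {X Y} _ _ _ _ i p hpi hY :=
    ⟨hY.1.of_retract (LinearMap.lcomp R N p) (LinearMap.lcomp R N i) (by
      refine LinearMap.ext fun φ => LinearMap.ext fun x => ?_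
      exact congrArg φ (LinearMap.congr_fun hpi x)),
      (ExtendsAlong.isThick N).summand i p hpi hY.2⟩

variable {Λ : Type} [Fintype Λ] [PartialOrder Λ] {Δ : Λ → Type} [∀ l, AddCommGroup (Δ l)]
  [∀ l, Module R (Δ l)] [∀ l, Module A (Δ l)] [∀ l, IsScalarTower R A (Δ l)]

lemma SplitQH.mem_of_isThick (h : SplitQH R A Λ Δ)
    {C : ∀ (X : Type) [AddCommGroup X] [Module A X], Prop} (hC : IsThick (A := A) C)
    (hΔ : ∀ l, C (Δ l)) : C A := by
  have hP : ∀ l, C (h.P l) := fun l =>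
    hC.extension (LinearMap.ker (h.epi l)).subtype (h.epi l) Subtype.val_injective
      (h.epi_surj l) (LinearMap.exact_subtype_ker_map _)
      ((h.ker_filt l).mem_of_isThick hC hΔ) (hΔ l)
  obtain ⟨n, i, p, hpi⟩ := h.add_gen (ModuleCat.of A A)
    (inferInstanceAs (Module.Finite A A)) (inferInstanceAs (Module.Projective A A))
  exact hC.summand (X := A) i p hpi
    (hC.pi (Fin n) (fun _ => ∀ l, h.P l) fun _ => hC.pi Λ (fun l => h.P l) hP)

lemma SplitQH.fgProj_of_extendsAlong (h : SplitQH R A Λ Δ) {N : Type} [AddCommGroup N]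
    [Module R N] [Module A N] [IsScalarTower R A N]
    (hN : ∀ l, FGProj R (Δ l →ₗ[A] N) ∧ ExtendsAlong (A := A) (Δ l) N) : FGProj R N :=
  (h.mem_of_isThick (fgProj_hom_and_extendsAlong_isThick (R := R) N) hN).1.of_equiv
    (LinearMap.ringLmapEquivSelf A R N).symm

lemma IsCostandard.fgProj {Nb : Λ → Type} [∀ l, AddCommGroup (Nb l)] [∀ l, Module R (Nb l)]
    [∀ l, Module A (Nb l)] [∀ l, IsScalarTower R A (Nb l)] (h : SplitQH R A Λ Δ)
    (hc : IsCostandard R A Λ Δ Nb) (m : Λ) : FGProj R (Nb m) := by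
  obtain ⟨-, hiso, hzero, hext⟩ := hc
  refine h.fgProj_of_extendsAlong fun l => ⟨?_, (hext l m 1 one_pos).extendsAlong⟩
  by_cases hlm : l = m
  · subst hlm
    obtain ⟨e⟩ := hiso l
    exact FGProj.of_equiv ⟨inferInstance, inferInstance⟩ e
  · have : Subsingleton (Δ l →ₗ[A] Nb m) :=
      ⟨fun f g => (hzero l m hlm f).trans (hzero l m hlm g).symm⟩
    exact FGProj.of_subsingleton _

/-- The map of right `A`-modules dual to a map of left `A`-modules. -/
def dualMapOp {X Y : Type} [AddCommGroup X] [Module R X] [Module A X] [IsScalarTower R A X]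
    [AddCommGroup Y] [Module R Y] [Module A Y] [IsScalarTower R A Y] (f : X →ₗ[A] Y) :
    (Y →ₗ[R] R) →ₗ[Aᵐᵒᵖ] (X →ₗ[R] R) where
  toFun φ := φ.comp (f.restrictScalars R)
  map_add' _ _ := rfl
  map_smul' a φ := by
    ext x
    simp

lemma module_eq_of_isScalarTower {X : Type} [AddCommGroup X] [Module A X]
    (m₁ m₂ : Module R X)
    (h₁ : @IsScalarTower R A X _ _ m₁.toSMul) (h₂ : @IsScalarTower R A X _ _ m₂.toSMul) :
    m₁ = m₂ := by
  refine Module.ext' _ _ fun r x => ?_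
  exact (@algebraMap_smul R _ A _ _ X _ _ m₁ h₁ r x).symm.trans
    (@algebraMap_smul R _ A _ _ X _ _ m₂ h₂ r x)

lemma isScalarTower_compHom (X : Type) [AddCommGroup X] [Module A X] :
    let _ := Module.compHom X (algebraMap R A)
    IsScalarTower R A X :=
  letI := Module.compHom X (algebraMap R A)
  IsScalarTower.of_algebraMap_smul fun _ _ => rfl

/-- The modules that are finitely generated projective over `R` and whose dual lies in a given
thick class of right modules form a thick class. -/
lemma IsThick.dual {C : ∀ (X : Type) [AddCommGroup X] [Module Aᵐᵒᵖ X], Prop}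
    (hC : IsThick (A := Aᵐᵒᵖ) C) :
    IsThick (A := A) (fun X _ _ => ∀ [Module R X] [IsScalarTower R A X],
      FGProj R X ∧ C (X →ₗ[R] R)) where
  zero X _ _ _ _ _ := ⟨FGProj.of_subsingleton X, hC.zero _⟩
  extension {X Y Z} _ _ _ _ _ _ f g hf hg hfg hX hZ _ _ := by
    let _ := Module.compHom X (algebraMap R A)
    let _ := Module.compHom Z (algebraMap R A)
    have := isScalarTower_compHom (R := R) (A := A) X
    have := isScalarTower_compHom (R := R) (A := A) Z
    obtain ⟨hX, hXC⟩ := hX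
    obtain ⟨hZ, hZC⟩ := hZ
    have := hZ.proj
    refine ⟨FGProj.of_exact (f.restrictScalars R) (g.restrictScalars R) hf hg hfg hX hZ, ?_⟩
    obtain ⟨r, hr⟩ := exists_retraction_of_projective (f.restrictScalars R)
      (g.restrictScalars R) hf hg hfg
    refine hC.extension (dualMapOp (R := R) g) (dualMapOp (R := R) f) ?_ ?_ ?_ hZC hXC
    · intro φ ψ h
      exact LinearMap.ext fun z => by
        obtain ⟨y, rfl⟩ := hg z
        exact LinearMap.congr_fun h y
    · intro φ
      refine ⟨φ.comp r, LinearMap.ext fun x => ?_⟩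
      exact congrArg φ (LinearMap.congr_fun hr x)
    · intro φ
      constructor
      · intro h
        refine exists_comp_eq_of_ker_le (g.restrictScalars R) hg φ fun y hy => ?_
        obtain ⟨x, rfl⟩ := (hfg y).mp hy
        exact LinearMap.congr_fun h x
      · rintro ⟨ψ, rfl⟩
        ext x
        simp [dualMapOp, hfg.apply_apply_eq_zero]
  summand {X Y} _ _ _ _ i p hpi hY _ _ := by
    let _ := Module.compHom Y (algebraMap R A)
    have := isScalarTower_compHom (R := R) (A := A) Y
    obtain ⟨hY, hYC⟩ := hY
    refine ⟨hY.of_retract (i.restrictScalars R) (p.restrictScalars R)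
      (LinearMap.ext fun x => LinearMap.congr_fun hpi x),
      hC.summand (dualMapOp (R := R) p) (dualMapOp (R := R) i) ?_ hYC⟩
    refine LinearMap.ext fun φ => LinearMap.ext fun x => ?_
    exact congrArg φ (LinearMap.congr_fun hpi x)

lemma InFilt.fgProj_and_dual_inThickClosure {N : Type} [AddCommGroup N] [Module R N]
    [Module A N] [IsScalarTower R A N] {S : Set Λ} (hN : InFilt R A Λ Δ S N)
    (hΔ : ∀ l, FGProj R (Δ l)) :
    FGProj R N ∧ InThickClosure (A := Aᵐᵒᵖ) (fun l => (Δ l →ₗ[R] R)) (N →ₗ[R] R) := by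
  have key (C : ∀ (X : Type) [AddCommGroup X] [Module Aᵐᵒᵖ X], Prop)
      (hC : IsThick (A := Aᵐᵒᵖ) C) (hCΔ : ∀ l, C (Δ l →ₗ[R] R)) :
      FGProj R N ∧ C (N →ₗ[R] R) :=
    hN.mem_of_isThick (hC.dual (R := R)) fun l m₁ h₁ => by
      obtain rfl : m₁ = ‹∀ l, Module R (Δ l)› l :=
        module_eq_of_isScalarTower (A := A) _ _ h₁ (‹∀ l, IsScalarTower R A (Δ l)› l)
      exact ⟨hΔ l, hCΔ l⟩
  have hTrue : IsThick (A := Aᵐᵒᵖ) (fun X _ _ => True) :=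
    ⟨fun _ => trivial, fun _ _ _ _ _ _ _ => trivial, fun _ _ _ _ => trivial⟩
  exact ⟨(key _ hTrue fun _ => trivial).1, fun C hC hCΔ => (key C hC hCΔ).2⟩

/-- The `A`-linear map `N → Hom_R(P, R)` adjoint to a map `P → Hom_R(N, R)` of right modules. -/
def dualFlip {N P : Type} [AddCommGroup N] [Module R N] [Module A N] [IsScalarTower R A N]
    [AddCommGroup P] [Module R P] [Module Aᵐᵒᵖ P] [IsScalarTower R Aᵐᵒᵖ P]
    (π : P →ₗ[Aᵐᵒᵖ] (N →ₗ[R] R)) : N →ₗ[A] (P →ₗ[R] R) where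
  toFun := (π.restrictScalars R).flip
  map_add' := map_add _
  map_smul' a x := by
    ext p
    simp

/-- The map of left `A`-modules dual to a map of right `A`-modules. -/
def dualMapLeft {X Y : Type} [AddCommGroup X] [Module R X] [Module Aᵐᵒᵖ X]
    [IsScalarTower R Aᵐᵒᵖ X] [AddCommGroup Y] [Module R Y] [Module Aᵐᵒᵖ Y]
    [IsScalarTower R Aᵐᵒᵖ Y] (f : X →ₗ[Aᵐᵒᵖ] Y) : (Y →ₗ[R] R) →ₗ[A] (X →ₗ[R] R) where
  toFun φ := φ.comp (f.restrictScalars R)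
  map_add' _ _ := rfl
  map_smul' a φ := by
    ext x
    simp

/-- If `Ext^1_A(L, N) = 0` and `N` is finitely generated projective over `R`, then for every
presentation `P → DN` of right modules, maps from its kernel to `DL` extend to `P`. -/
lemma extVanish.exists_extension_dual {L N P : Type}
    [AddCommGroup L] [Module R L] [Module A L] [IsScalarTower R A L]
    [AddCommGroup N] [Module R N] [Module A N] [IsScalarTower R A N]
    [AddCommGroup P] [Module R P] [Module Aᵐᵒᵖ P] [IsScalarTower R Aᵐᵒᵖ P]
    (h : extVanish A L N 1) (hN : FGProj R N) (π : P →ₗ[Aᵐᵒᵖ] (N →ₗ[R] R))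
    (hπ : Function.Surjective π) (α : LinearMap.ker π →ₗ[Aᵐᵒᵖ] (L →ₗ[R] R)) :
    ∃ β : P →ₗ[Aᵐᵒᵖ] (L →ₗ[R] R), ∀ k : LinearMap.ker π, β k = α k := by
  have := hN.fin
  have := hN.proj
  have hker : Function.Exact (LinearMap.ker π).subtype π := LinearMap.exact_subtype_ker_map _
  obtain ⟨r, hr⟩ := exists_retraction_of_projective
    ((LinearMap.ker π).subtype.restrictScalars R) (π.restrictScalars R)
    Subtype.val_injective hπ hker
  obtain ⟨ψ, hψ⟩ := h.exists_lift (dualFlip (R := R) π)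
    (dualMapLeft (R := R) (LinearMap.ker π).subtype)
    (by
      rw [injective_iff_map_eq_zero]
      intro x hx
      rw [← Module.forall_dual_apply_eq_zero_iff R]
      intro φ
      obtain ⟨p, rfl⟩ := hπ φ
      exact LinearMap.congr_fun hx p)
    (fun φ => ⟨φ.comp r, LinearMap.ext fun k => congrArg φ (LinearMap.congr_fun hr k)⟩)
    (by
      intro φ
      constructor
      · intro hφ
        obtain ⟨χ, hχ⟩ := exists_comp_eq_of_ker_le (π.restrictScalars R) hπ φ
          fun p hp => LinearMap.congr_fun hφ ⟨p, hp⟩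
        refine ⟨(Module.evalEquiv R N).symm χ, LinearMap.ext fun p => ?_⟩
        rw [← hχ]
        exact Module.apply_evalEquiv_symm_apply R N (π p) χ
      · rintro ⟨x, rfl⟩
        ext ⟨k, hk⟩
        exact congrArg (fun t => t x) (LinearMap.mem_ker.mp hk))
    (dualFlip (R := R) α)
  refine ⟨{ toFun := (ψ.restrictScalars R).flip
            map_add' := map_add _
            map_smul' := fun a p => ?_ }, fun k => LinearMap.ext fun x => ?_⟩
  · ext x
    simp
  · exact LinearMap.congr_fun (LinearMap.congr_fun hψ x) k

/-- The dual of a free right module of finite rank is a direct summand of a finite power of `DA`. -/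
lemma isDirectSummand_dual_pi (n : ℕ) :
    IsDirectSummand A ((Fin n → Aᵐᵒᵖ) →ₗ[R] R) (Fin n → (A →ₗ[R] R)) := by
  classical
  let e : A ≃ₗ[R] Aᵐᵒᵖ := MulOpposite.opLinearEquiv R
  let i : ((Fin n → Aᵐᵒᵖ) →ₗ[R] R) →ₗ[A] (Fin n → (A →ₗ[R] R)) :=
    { toFun := fun φ j => (φ.comp (LinearMap.single R (fun _ => Aᵐᵒᵖ) j)).comp e.toLinearMap
      map_add' := fun _ _ => rfl
      map_smul' := fun a φ => by
        ext j b
        simp [e, ← Pi.single_smul] }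
  let p : (Fin n → (A →ₗ[R] R)) →ₗ[A] ((Fin n → Aᵐᵒᵖ) →ₗ[R] R) :=
    { toFun := fun φ => LinearMap.lsum R (fun _ => Aᵐᵒᵖ) R
        fun j => (φ j).comp e.symm.toLinearMap
      map_add' := fun φ ψ => by
        refine LinearMap.ext fun x => ?_
        simp [Finset.sum_add_distrib]
      map_smul' := fun a φ => by
        refine LinearMap.ext fun x => ?_
        simp [e] }
  refine ⟨i, p, ?_⟩
  refine LinearMap.ext fun φ => LinearMap.ext fun x => ?_
  simp [i, p, e, ← map_sum, Finset.univ_sum_single]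

lemma inAdd_dual_of_extVanish {Nb : Λ → Type} [∀ l, AddCommGroup (Nb l)]
    [∀ l, Module R (Nb l)] [∀ l, Module A (Nb l)] [∀ l, IsScalarTower R A (Nb l)]
    (h : SplitQH R A Λ Δ) (hc : IsCostandard R A Λ Δ Nb) {N : Type} [AddCommGroup N]
    [Module A N] (hN : InFilt R A Λ Nb Set.univ N) (hext : extVanish A (∀ l, Nb l) N 1) :
    InAdd A (A →ₗ[R] R) N := by
  classical
  let _ := Module.compHom N (algebraMap R A)
  have := isScalarTower_compHom (R := R) (A := A) N
  obtain ⟨hNR, hclos⟩ := hN.fgProj_and_dual_inThickClosure (hc.fgProj h)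
  have := hNR.fin
  have := hNR.proj
  obtain ⟨hop⟩ := hc.1
  have : Module.Finite Aᵐᵒᵖ (N →ₗ[R] R) := Module.Finite.of_restrictScalars_finite R Aᵐᵒᵖ _
  obtain ⟨n, π, hπ⟩ := Module.Finite.exists_fin' Aᵐᵒᵖ (N →ₗ[R] R)
  have : Module.Projective Aᵐᵒᵖ (N →ₗ[R] R) := by
    refine projective_of_inThickClosure hop hclos π hπ fun l α => ?_
    obtain ⟨β, hβ⟩ := hext.exists_extension_dual hNR π hπ
      ((dualMapOp (R := R) (LinearMap.proj l)).comp α)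
    refine ⟨(dualMapOp (R := R) (LinearMap.single A Nb l)).comp β, fun k => ?_⟩
    rw [LinearMap.comp_apply, hβ]
    ext x
    simp [dualMapOp]
  obtain ⟨s, hs⟩ := π.exists_rightInverse_of_surjective (LinearMap.range_eq_top.mpr hπ)
  obtain ⟨i, p, hpi⟩ := isDirectSummand_dual_pi (R := R) (A := A) n
  obtain ⟨t, ht⟩ := exists_comp_eq_of_range_le (dualFlip (R := R) (LinearMap.id (R := Aᵐᵒᵖ)
    (M := N →ₗ[R] R))) (Module.evalEquiv R N).injective (dualMapLeft (R := R) s)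
    fun _ => (Module.evalEquiv R N).surjective _
  refine ⟨n, i.comp (dualFlip (R := R) π), t.comp p, LinearMap.ext fun x => ?_⟩
  refine (Module.evalEquiv R N).injective ((LinearMap.congr_fun ht _).trans ?_)
  have hpi' := LinearMap.congr_fun hpi (dualFlip (R := R) π x)
  simp only [LinearMap.comp_apply, LinearMap.id_apply] at hpi' ⊢
  rw [hpi']
  ext φ
  exact congrArg (fun t => t x) (LinearMap.congr_fun hs φ)

end Duality

end Lifting

/-- If `M ∈ F(Δ̃)` and `Ext^1_A(M, ⊕_λ Δ(λ)) = 0`, then `M` is a projective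
`A`-module. Dually, if `N ∈ F(∇̃)` and `Ext^1_A(⊕_λ ∇(λ), N) = 0`, then `N` is
`(A,R)`-injective, i.e. `N ∈ add (D A)`. -/
theorem ext_projective_and_injective_in_filtrations
    (R : Type) [CommRing R] [IsNoetherianRing R]
    (A : Type) [Ring A] [Algebra R A]
    (Λ : Type) [Fintype Λ] [PartialOrder Λ]
    (Δ : Λ → Type) [∀ l, AddCommGroup (Δ l)] [∀ l, Module R (Δ l)]
    [∀ l, Module A (Δ l)] [∀ l, IsScalarTower R A (Δ l)]
    (Nb : Λ → Type) [∀ l, AddCommGroup (Nb l)] [∀ l, Module R (Nb l)]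
    [∀ l, Module A (Nb l)] [∀ l, IsScalarTower R A (Nb l)]
    (h : SplitQH R A Λ Δ) (hc : IsCostandard R A Λ Δ Nb) :
    (∀ (M : Type) [AddCommGroup M] [Module A M], InFilt R A Λ Δ Set.univ M →
      extVanish A M (∀ l, Δ l) 1 → Module.Projective A M) ∧
    (∀ (N : Type) [AddCommGroup N] [Module A N], InFilt R A Λ Nb Set.univ N →
      extVanish A (∀ l, Nb l) N 1 → InAdd A (A →ₗ[R] R) N) := by
  exact ⟨fun M _ _ hM hext => projective_of_extVanish h hM hext,
    fun N _ _ hN hext => inAdd_dual_of_extVanish h hc hN hext⟩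

end
end
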